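/- arXiv:1911.05966 — 5 statements merged into one kernel-verified Lean document; each statement's English description precedes it below -/
import Mathlib

section
/- Let N ≥ 1, 0 < s < 1, and η(x) = (1+|x|²)^{-(N+2s)/2} on ℝ^N. Then there exists a constant C > 0 depending only on N and s such that |(-Δ)^s η(x)| ≤ C η(x) for all x ∈ ℝ^N. -/
/-!
Write `p = N + 2 s`. After the substitutions `ξ = x ± h` the truncated integral is half of the
integral of `D(h) / ‖h‖ ^ p` over `‖h‖ > ε`, where `D(h) = 2 η(x) - η(x + h) - η(x - h)`. By
dominated convergence, both the existence of the principal value and the estimate follow from a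
bound `|D(h)| / ‖h‖ ^ p ≤ η(x) * B(h)` with `B` integrable and `∫ B` independent of `x`.

* For `‖h‖ ≤ 1 / 2` (`abs_etaDiff_le_near`): `|D(h)| ≤ C η(x) ‖h‖ ^ 2`. Dividing by `1 + ‖x‖ ^ 2`
  reduces this to the scalar inequality `second_difference_rpow` for the convex function
  `t ↦ t ^ (-p / 2)`, which follows from tangent-line inequalities alone. The resulting kernel
  `‖h‖ ^ (2 - p)` is integrable near `0` because `s < 1`.
* For `‖h‖ ≥ 1 / 2` (`abs_etaDiff_div_le_far`): the kernel is at most a multiple of `η(h)`, and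
  `η(a) η(b) ≤ C η(a + b) (η(a) + η(b))` (`fracEta_mul_le`) with `a = x ± h`, `b = ∓ h` gives the
  majorant `C η(x) (η(h) + η(x + h) + η(x - h))`. Its integral is a multiple of `η(x) ∫ η` by
  translation invariance.
-/

open MeasureTheory Filter Set

noncomputable section

/-- Euclidean space `ℝ^N`. -/
abbrev ES (N : ℕ) := EuclideanSpace ℝ (Fin N)

/-- The normalization constant `c_{N,s}` of the fractional Laplacian. -/
def fracC (N : ℕ) (s : ℝ) : ℝ :=
  2 ^ (2 * s) * s * Real.Gamma ((N : ℝ) / 2 + s) /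
    (Real.pi ^ ((N : ℝ) / 2) * Real.Gamma (1 - s))

/-- `HasFracLapAt N s u x v` means that the principal-value limit defining
`(-Δ)^s u (x)` exists and equals `v`:
`(-Δ)^s u (x) = c_{N,s} lim_{ε→0⁺} ∫_{ℝ^N ∖ B(x,ε)} (u x - u ξ)/|x-ξ|^{N+2s} dξ`. -/
def HasFracLapAt (N : ℕ) (s : ℝ) (u : ES N → ℝ) (x : ES N) (v : ℝ) : Prop :=
  Filter.Tendsto
    (fun ε : ℝ => fracC N s *
      ∫ ξ in {ξ : ES N | ε < ‖x - ξ‖}, (u x - u ξ) / ‖x - ξ‖ ^ ((N : ℝ) + 2 * s))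
    (nhdsWithin 0 (Set.Ioi 0)) (nhds v)

/-- The weight function `η(x) = (1+|x|²)^{-(N+2s)/2}`. -/
def fracEta (N : ℕ) (s : ℝ) (x : ES N) : ℝ :=
  (1 + ‖x‖ ^ 2) ^ (-(((N : ℝ) + 2 * s) / 2))

/-- `ρ_m(x) = (1+|x|²)^{-m/2}`. -/
def fracRho (N : ℕ) (m : ℝ) (x : ES N) : ℝ :=
  (1 + ‖x‖ ^ 2) ^ (-(m / 2))

/-- Membership in `L_s(ℝ^N)`: locally integrable with
`∫ |u(x)|/(1+|x|)^{N+2s} dx < ∞`. -/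
def MemLs (N : ℕ) (s : ℝ) (u : ES N → ℝ) : Prop :=
  MeasureTheory.LocallyIntegrable u volume ∧
    MeasureTheory.Integrable
      (fun x : ES N => |u x| / (1 + ‖x‖) ^ ((N : ℝ) + 2 * s)) volume

/-- Membership in the Hölder space `C^β(ℝ^N)` for `0 < β < 2`:
Hölder continuity of exponent `β` if `β ≤ 1`, and a Hölder continuous
derivative of exponent `β - 1` if `β > 1`. -/
def MemCHolder {N : ℕ} (β : ℝ) (u : ES N → ℝ) : Prop :=
  (β ≤ 1 → ∃ C : NNReal, HolderWith C β.toNNReal u) ∧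
  (1 < β → Differentiable ℝ u ∧
    ∃ C : NNReal, HolderWith C (β - 1).toNNReal (fderiv ℝ u))

/-- A solution of `(-Δ)^s u = e^u` on `ℝ^N`: a function
`u ∈ C^{2σ}(ℝ^N) ∩ L_s(ℝ^N)` for some `σ > s` satisfying the equation
pointwise. -/
def IsSolution (N : ℕ) (s : ℝ) (u : ES N → ℝ) : Prop :=
  (∃ σ : ℝ, s < σ ∧ MemCHolder (2 * σ) u) ∧ MemLs N s u ∧
    ∀ x : ES N, HasFracLapAt N s u x (Real.exp (u x))

/-- Stability: `∫ e^u φ² ≤ (c_{N,s}/2) ∬ (φ(x)-φ(y))²/|x-y|^{N+2s}` for all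
`φ ∈ C¹_c(ℝ^N)`. -/
def IsStable (N : ℕ) (s : ℝ) (u : ES N → ℝ) : Prop :=
  ∀ φ : ES N → ℝ, ContDiff ℝ 1 φ → HasCompactSupport φ →
    ∫ x : ES N, Real.exp (u x) * φ x ^ 2 ≤
      fracC N s / 2 *
        ∫ x : ES N, ∫ y : ES N, (φ x - φ y) ^ 2 / ‖x - y‖ ^ ((N : ℝ) + 2 * s)

/-- Surface area `|S^{N-1}| = 2 π^{N/2} / Γ(N/2)` of the unit sphere in `ℝ^N`. -/
def sphArea (N : ℕ) : ℝ :=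
  2 * Real.pi ^ ((N : ℝ) / 2) / Real.Gamma ((N : ℝ) / 2)

/-- The normalization constant `p(N,s)` of the Poisson kernel. -/
def poissonC (N : ℕ) (s : ℝ) : ℝ :=
  Real.Gamma (((N : ℝ) + 2 * s) / 2) / (Real.pi ^ ((N : ℝ) / 2) * Real.Gamma s)

/-- The Poisson kernel `P_s(x,t) = p(N,s) t^{2s} / (|x|²+t²)^{(N+2s)/2}`. -/
def poissonKer (N : ℕ) (s : ℝ) (x : ES N) (t : ℝ) : ℝ :=
  poissonC N s * t ^ (2 * s) / (‖x‖ ^ 2 + t ^ 2) ^ (((N : ℝ) + 2 * s) / 2)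

/-- The Caffarelli–Silvestre extension `U(x,t) = ∫ P_s(x-z,t) u(z) dz`. -/
def csExtension (N : ℕ) (s : ℝ) (u : ES N → ℝ) (x : ES N) (t : ℝ) : ℝ :=
  ∫ z : ES N, poissonKer N s (x - z) t * u z

/-- `ζ(x,t) = (1+|x|²+t²)^{-(N+2s)/4}`. -/
def csZeta (N : ℕ) (s : ℝ) (x : ES N) (t : ℝ) : ℝ :=
  (1 + ‖x‖ ^ 2 + t ^ 2) ^ (-(((N : ℝ) + 2 * s) / 4))

/-- The squared (full) gradient `|∇F|²(x,t) = |∇_x F|² + |∂_t F|²` of a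
function `F` on `ℝ^N × ℝ`. -/
def gradSqr (N : ℕ) (F : ES N → ℝ → ℝ) (x : ES N) (t : ℝ) : ℝ :=
  ‖fderiv ℝ (fun y => F y t) x‖ ^ 2 + (deriv (F x) t) ^ 2

/-! ### Second differences of negative powers -/

/-- Tangent-line (Bernoulli) inequality at `1` for the convex function `t ↦ t ^ (-q)`. -/
lemma tangent_rpow_neg {q t : ℝ} (hq : 0 ≤ q) (ht : 0 < t) : 1 - q * (t - 1) ≤ t ^ (-q) := by
  rw [Real.rpow_def_of_pos ht]
  have h1 := Real.add_one_le_exp (Real.log t * -q)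
  have h2 := mul_le_mul_of_nonneg_left (Real.log_le_sub_one_of_pos ht) hq
  linarith

/-- Tangent-line inequality at `y`, by homogeneity. -/
lemma tangent_rpow_neg' {q y z : ℝ} (hq : 0 ≤ q) (hy : 0 < y) (hz : 0 < z) :
    y ^ (-q) - q * y ^ (-q - 1) * (z - y) ≤ z ^ (-q) := by
  have h := tangent_rpow_neg hq (div_pos hz hy)
  have hp : 0 < y ^ (-q) := Real.rpow_pos_of_pos hy _
  rw [Real.div_rpow hz.le hy.le, le_div_iff₀ hp] at h
  have e : y ^ (-q - 1) = y ^ (-q) / y := Real.rpow_sub_one hy.ne' _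
  rw [e]
  calc _ = (1 - q * (z / y - 1)) * y ^ (-q) := by field_simp
    _ ≤ _ := h

/-- Upper bound for the symmetric second difference of `t ↦ t ^ (-q)` at `1`: the tangents at
`1 ± u` bound it by `q u` times the increment of `t ^ (-q - 1)` between them, and a further
tangent at `1 - u` bounds that increment. -/
lemma symm_rpow_le {q u : ℝ} (hq : 0 ≤ q) (h0 : 0 ≤ u) (hu : u ≤ 1 / 2) :
    (1 + u) ^ (-q) + (1 - u) ^ (-q) - 2 ≤ q * (q + 1) * 2 ^ (q + 3) * u ^ 2 := by
  have hp : 0 < 1 + u := by linarith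
  have hm : 0 < 1 - u := by linarith
  have h1 := tangent_rpow_neg' hq hp one_pos
  have h2 := tangent_rpow_neg' hq hm one_pos
  have h3 := tangent_rpow_neg' (q := q + 1) (by linarith) hm hp
  rw [Real.one_rpow] at h1 h2
  have e : -(q + 1) = -q - 1 := by ring
  have e2 : -q - 1 - 1 = -(q + 2) := by ring
  rw [e, e2] at h3
  have h4 : (1 - u) ^ (-(q + 2)) ≤ 2 ^ (q + 2) := by
    calc (1 - u) ^ (-(q + 2)) ≤ (1 / 2 : ℝ) ^ (-(q + 2)) :=
          Real.rpow_le_rpow_of_nonpos (by norm_num) (by linarith) (by linarith)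
      _ = _ := by rw [one_div, Real.inv_rpow (by norm_num), Real.rpow_neg (by norm_num), inv_inv]
  have e3 : (2 : ℝ) ^ (q + 3) = 2 * 2 ^ (q + 2) := by
    rw [show q + 3 = (q + 2) + 1 by ring, Real.rpow_add_one (by norm_num)]; ring
  have h5 : (1 - u) ^ (-q - 1) - (1 + u) ^ (-q - 1) ≤ (q + 1) * 2 ^ (q + 2) * (2 * u) := by
    have : (q + 1) * (1 - u) ^ (-(q + 2)) * (2 * u) ≤ (q + 1) * 2 ^ (q + 2) * (2 * u) := by gcongr
    nlinarith
  have h6 := mul_le_mul_of_nonneg_left h5 (mul_nonneg hq h0)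
  rw [e3]
  nlinarith

/-- Second-difference bound with an additional shift `b`, which is treated as being of second
order: convexity gives the upper bound, and monotonicity reduces the lower bound to `b = 0`. -/
lemma second_difference_rpow {q b u : ℝ} (hq : 0 ≤ q) (hb : 0 ≤ b) (hu : |u| ≤ 1 / 2) :
    |2 - (1 + b + u) ^ (-q) - (1 + b - u) ^ (-q)| ≤
      2 * q * b + q * (q + 1) * 2 ^ (q + 3) * u ^ 2 := by
  wlog h0 : 0 ≤ u generalizing u
  · have := this (u := -u) (by rwa [abs_neg]) (by linarith)
    rw [neg_sq, ← sub_eq_add_neg, sub_neg_eq_add] at this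
    rwa [sub_right_comm]
  rw [abs_of_nonneg h0] at hu
  have h1 := tangent_rpow_neg (t := 1 + b + u) hq (by linarith)
  have h2 := tangent_rpow_neg (t := 1 + b - u) hq (by linarith)
  have h3 : (1 + b + u) ^ (-q) ≤ (1 + u) ^ (-q) :=
    Real.rpow_le_rpow_of_nonpos (by linarith) (by linarith) (by linarith)
  have h4 : (1 + b - u) ^ (-q) ≤ (1 - u) ^ (-q) :=
    Real.rpow_le_rpow_of_nonpos (by linarith) (by linarith) (by linarith)
  have h5 := symm_rpow_le hq h0 hu
  have h6 : 0 ≤ q * (q + 1) * 2 ^ (q + 3) * u ^ 2 := by positivity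
  have h7 : 0 ≤ q * b := by positivity
  rw [abs_le]
  constructor <;> nlinarith

/-! ### The weight η -/

lemma fracEta_pos (N : ℕ) (s : ℝ) (x : ES N) : 0 < fracEta N s x :=
  Real.rpow_pos_of_pos (by positivity) _

lemma fracEta_le_one {N : ℕ} {s : ℝ} (hs0 : 0 < s) (x : ES N) : fracEta N s x ≤ 1 := by
  unfold fracEta
  apply Real.rpow_le_one_of_one_le_of_nonpos
  · nlinarith [sq_nonneg ‖x‖]
  · have : (0 : ℝ) ≤ N := Nat.cast_nonneg N
    linarith

lemma continuous_fracEta (N : ℕ) (s : ℝ) : Continuous (fracEta N s) := by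
  unfold fracEta
  refine Continuous.rpow_const (by fun_prop) fun x => Or.inl ?_
  positivity

lemma integrable_fracEta {N : ℕ} {s : ℝ} (hs0 : 0 < s) : Integrable (fracEta N s) := by
  have h := integrable_rpow_neg_one_add_norm_sq (E := ES N) (μ := volume) (r := (N : ℝ) + 2 * s)
    (by rw [finrank_euclideanSpace_fin]; linarith)
  simp only [neg_div] at h
  exact h

lemma fracEta_neg (N : ℕ) (s : ℝ) (x : ES N) : fracEta N s (-x) = fracEta N s x := by
  simp [fracEta]

/-- The product inequality `η(a) η(b) ≤ C η(a + b) (η(a) + η(b))`: at least one of `a`, `b` has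
size comparable to `a + b` or larger, so `η (a + b)` dominates the smaller factor. -/
lemma fracEta_mul_le {N : ℕ} {s : ℝ} (hs0 : 0 < s) (a b : ES N) :
    fracEta N s a * fracEta N s b ≤
      4 ^ (((N : ℝ) + 2 * s) / 2) * fracEta N s (a + b) * (fracEta N s a + fracEta N s b) := by
  wlog hab : ‖a‖ ≤ ‖b‖ generalizing a b
  · have := this b a (le_of_not_ge hab)
    rwa [add_comm b a, mul_comm (fracEta N s b), add_comm (fracEta N s b)] at this
  have hN : (0 : ℝ) ≤ N := Nat.cast_nonneg N
  have ha := fracEta_pos N s a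
  have hb := fracEta_pos N s b
  have hc := fracEta_pos N s (a + b)
  have h : fracEta N s b ≤ 4 ^ (((N : ℝ) + 2 * s) / 2) * fracEta N s (a + b) := by
    have h1 : 1 + ‖a + b‖ ^ 2 ≤ 4 * (1 + ‖b‖ ^ 2) := by
      have : ‖a + b‖ ≤ 2 * ‖b‖ := (norm_add_le a b).trans (by linarith)
      nlinarith [norm_nonneg (a + b)]
    have h2 : (4 * (1 + ‖b‖ ^ 2)) ^ (-(((N : ℝ) + 2 * s) / 2)) ≤
        (1 + ‖a + b‖ ^ 2) ^ (-(((N : ℝ) + 2 * s) / 2)) :=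
      Real.rpow_le_rpow_of_nonpos (by positivity) h1 (by linarith)
    rw [Real.mul_rpow (by norm_num) (by positivity), Real.rpow_neg (by norm_num),
      inv_mul_le_iff₀ (by positivity)] at h2
    exact h2
  calc fracEta N s a * fracEta N s b
      ≤ fracEta N s a * (4 ^ (((N : ℝ) + 2 * s) / 2) * fracEta N s (a + b)) := by gcongr
    _ = 4 ^ (((N : ℝ) + 2 * s) / 2) * fracEta N s (a + b) * fracEta N s a := by ring
    _ ≤ _ := by gcongr; linarith

/-- Away from the origin the kernel `‖h‖ ^ -(N + 2 s)` is comparable to `η`. -/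
lemma inv_norm_rpow_le {N : ℕ} {s : ℝ} (hs0 : 0 < s) {ε : ℝ} (hε : 0 < ε) {h : ES N}
    (hh : ε ≤ ‖h‖) :
    (‖h‖ ^ ((N : ℝ) + 2 * s))⁻¹ ≤
      (1 + 1 / ε ^ 2) ^ (((N : ℝ) + 2 * s) / 2) * fracEta N s h := by
  have hN : (0 : ℝ) ≤ N := Nat.cast_nonneg N
  have hp : 0 < ‖h‖ := hε.trans_le hh
  have h1 : 1 + ‖h‖ ^ 2 ≤ (1 + 1 / ε ^ 2) * ‖h‖ ^ 2 := by
    have : 1 ≤ 1 / ε ^ 2 * ‖h‖ ^ 2 := by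
      rw [one_div, inv_mul_eq_div, one_le_div (by positivity)]
      gcongr
    linarith
  have h2 := Real.rpow_le_rpow (z := ((N : ℝ) + 2 * s) / 2) (by positivity) h1 (by linarith)
  have h3 : ‖h‖ ^ ((N : ℝ) + 2 * s) = (‖h‖ ^ 2) ^ (((N : ℝ) + 2 * s) / 2) := by
    rw [← Real.rpow_natCast, ← Real.rpow_mul hp.le]; congr 1; push_cast; ring
  rw [Real.mul_rpow (by positivity) (by positivity), ← h3] at h2
  unfold fracEta
  rw [Real.rpow_neg (by positivity), ← div_eq_mul_inv, le_div_iff₀ (by positivity),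
    inv_mul_le_iff₀ (by positivity)]
  exact h2.trans_eq (mul_comm _ _)

/-! ### Pointwise bounds for the second difference of η -/

/-- The second difference `2 η(x) - η(x + h) - η(x - h)`. -/
def etaDiff (N : ℕ) (s : ℝ) (x h : ES N) : ℝ :=
  2 * fracEta N s x - fracEta N s (x + h) - fracEta N s (x - h)

/-- Near bound: `(1 + ‖x ± h‖ ^ 2) / (1 + ‖x‖ ^ 2) = 1 + b ± u` with `b` and `u ^ 2` at most
`‖h‖ ^ 2`. -/
lemma abs_etaDiff_le_near {N : ℕ} {s : ℝ} (hs0 : 0 < s) {q : ℝ} (hq : q = ((N : ℝ) + 2 * s) / 2)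
    (x : ES N) {h : ES N} (hh : ‖h‖ ≤ 1 / 2) :
    |etaDiff N s x h| ≤ fracEta N s x * ((2 * q + q * (q + 1) * 2 ^ (q + 3)) * ‖h‖ ^ 2) := by
  have hN : (0 : ℝ) ≤ N := Nat.cast_nonneg N
  have hq0 : 0 ≤ q := by rw [hq]; positivity
  set a : ℝ := 1 + ‖x‖ ^ 2 with ha
  have ha1 : 1 ≤ a := by nlinarith [sq_nonneg ‖x‖]
  have ha0 : 0 < a := by linarith
  set b : ℝ := ‖h‖ ^ 2 / a with hb
  set u : ℝ := 2 * inner ℝ x h / a with hu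
  have hb0 : 0 ≤ b := by positivity
  have hbh : b ≤ ‖h‖ ^ 2 := div_le_self (by positivity) ha1
  have hux : |u| ≤ ‖h‖ := by
    rw [hu, abs_div, abs_of_pos ha0, div_le_iff₀ ha0, abs_mul, abs_two]
    have := abs_real_inner_le_norm x h
    nlinarith [mul_nonneg (norm_nonneg h) (sq_nonneg (‖x‖ - 1))]
  have hu2 : u ^ 2 ≤ ‖h‖ ^ 2 := by
    rw [← sq_abs u]; gcongr
  have hu12 := abs_le.1 (hux.trans hh)
  have e1 : fracEta N s (x + h) = fracEta N s x * (1 + b + u) ^ (-q) := by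
    unfold fracEta
    rw [← hq, ← Real.mul_rpow (by positivity) (by linarith), norm_add_sq_real]
    congr 1
    rw [hb, hu, ← ha]
    field_simp
    rw [ha]; ring
  have e2 : fracEta N s (x - h) = fracEta N s x * (1 + b - u) ^ (-q) := by
    unfold fracEta
    rw [← hq, ← Real.mul_rpow (by positivity) (by linarith), norm_sub_sq_real]
    congr 1
    rw [hb, hu, ← ha]
    field_simp
    rw [ha]; ring
  have e3 : etaDiff N s x h =
      fracEta N s x * (2 - (1 + b + u) ^ (-q) - (1 + b - u) ^ (-q)) := by
    rw [etaDiff, e1, e2]; ring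
  have hp := fracEta_pos N s x
  rw [e3, abs_mul, abs_of_pos hp]
  gcongr
  refine (second_difference_rpow hq0 hb0 (hux.trans hh)).trans ?_
  rw [add_mul]
  gcongr

/-- Far bound: the kernel is replaced by `5 ^ q * η(h)`, where `5 = 1 + 1 / (1 / 2) ^ 2`, and
`fracEta_mul_le` is applied to `x = (x ± h) ∓ h`. -/
lemma abs_etaDiff_div_le_far {N : ℕ} {s : ℝ} (hs0 : 0 < s) {q : ℝ} (hq : q = ((N : ℝ) + 2 * s) / 2)
    (x : ES N) {h : ES N} (hh : 1 / 2 ≤ ‖h‖) :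
    |etaDiff N s x h| / ‖h‖ ^ ((N : ℝ) + 2 * s) ≤ fracEta N s x *
      (5 ^ q * (2 + 2 * 4 ^ q) *
        (fracEta N s h + fracEta N s (x + h) + fracEta N s (x - h))) := by
  have h1 := inv_norm_rpow_le hs0 (by norm_num) hh
  have h2 := fracEta_mul_le hs0 (x + h) (-h)
  have h3 := fracEta_mul_le hs0 (x - h) h
  rw [fracEta_neg, add_neg_cancel_right, ← hq] at h2
  rw [sub_add_cancel, ← hq] at h3
  rw [← hq] at h1
  norm_num only at h1
  have p0 := fracEta_pos N s x
  have p1 := fracEta_pos N s (x + h)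
  have p2 := fracEta_pos N s (x - h)
  have p3 := fracEta_pos N s h
  have hd : |etaDiff N s x h| ≤
      2 * fracEta N s x + fracEta N s (x + h) + fracEta N s (x - h) := by
    rw [etaDiff, abs_le]; constructor <;> linarith
  rw [div_eq_mul_inv]
  have h4 : (0 : ℝ) < 4 ^ q := by positivity
  have h5 : (0 : ℝ) < 5 ^ q := by positivity
  calc _ ≤ (2 * fracEta N s x + fracEta N s (x + h) + fracEta N s (x - h)) *
        (5 ^ q * fracEta N s h) := by gcongr
    _ = 5 ^ q * (2 * fracEta N s x * fracEta N s h + fracEta N s (x + h) * fracEta N s h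
        + fracEta N s (x - h) * fracEta N s h) := by ring
    _ ≤ 5 ^ q * (2 * fracEta N s x * fracEta N s h
        + 4 ^ q * fracEta N s x * (fracEta N s (x + h) + fracEta N s h)
        + 4 ^ q * fracEta N s x * (fracEta N s (x - h) + fracEta N s h)) := by gcongr
    _ = 5 ^ q * fracEta N s x * ((2 + 2 * 4 ^ q) * fracEta N s h
        + 4 ^ q * fracEta N s (x + h) + 4 ^ q * fracEta N s (x - h)) := by ring
    _ ≤ 5 ^ q * fracEta N s x * ((2 + 2 * 4 ^ q) * fracEta N s h
        + (2 + 2 * 4 ^ q) * fracEta N s (x + h) + (2 + 2 * 4 ^ q) * fracEta N s (x - h)) := by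
      gcongr <;> linarith
    _ = _ := by ring

/-! ### An integrable majorant -/

/-- The truncated kernel `‖h‖ ^ (2 - (N + 2 s))` on the ball of radius `1 / 2`, written as a
radial function. -/
def nearKer (N : ℕ) (s : ℝ) (h : ES N) : ℝ :=
  (Iic (1 / 2 : ℝ)).indicator (fun r => r ^ (2 - ((N : ℝ) + 2 * s))) ‖h‖

lemma nearKer_nonneg (N : ℕ) (s : ℝ) (h : ES N) : 0 ≤ nearKer N s h := by
  unfold nearKer
  by_cases hh : ‖h‖ ∈ Iic (1 / 2 : ℝ)
  · rw [indicator_of_mem hh]; positivity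
  · rw [indicator_of_notMem hh]

/-- In polar coordinates the integral becomes `∫ r ^ (1 - 2 s)` over `(0, 1 / 2)`, which converges
because `s < 1`. -/
lemma integrable_nearKer {N : ℕ} (hN : 1 ≤ N) {s : ℝ} (hs1 : s < 1) :
    Integrable (nearKer N s) := by
  have : Nonempty (Fin N) := ⟨⟨0, hN⟩⟩
  have : Nontrivial (ES N) := inferInstance
  refine (integrable_fun_norm_addHaar (volume : Measure (ES N))
    (f := (Iic (1 / 2 : ℝ)).indicator (fun r => r ^ (2 - ((N : ℝ) + 2 * s))))).2 ?_
  have h1 : IntegrableOn (fun r : ℝ => r ^ (1 - 2 * s)) (Ioc 0 (1 / 2)) := by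
    rw [← intervalIntegrable_iff_integrableOn_Ioc_of_le (by norm_num)]
    exact intervalIntegral.intervalIntegrable_rpow' (by linarith)
  have h2 := (integrable_indicator_iff measurableSet_Ioc).2 h1
  refine (h2.integrableOn (s := Ioi 0)).congr_fun ?_ measurableSet_Ioi
  intro r hr
  have hr' : 0 < r := hr
  simp only [finrank_euclideanSpace_fin, smul_eq_mul]
  by_cases h : r ≤ 1 / 2
  · rw [indicator_of_mem (show r ∈ Ioc 0 (1 / 2) from ⟨hr', h⟩),
      indicator_of_mem (show r ∈ Iic (1 / 2) from h), ← Real.rpow_natCast, ← Real.rpow_add hr']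
    congr 1
    rw [Nat.cast_sub hN]; push_cast; ring
  · rw [indicator_of_notMem (fun hm : r ∈ Ioc 0 (1 / 2) => h hm.2),
      indicator_of_notMem (show r ∉ Iic (1 / 2) from h), mul_zero]

/-- An integrable majorant of the symmetrized integrand, with the factor `η(x)` taken out. -/
lemma abs_etaDiff_div_le {N : ℕ} {s : ℝ} (hs0 : 0 < s) :
    ∃ A : ℝ, 0 < A ∧ ∀ x h : ES N,
      |etaDiff N s x h / ‖h‖ ^ ((N : ℝ) + 2 * s)| ≤ fracEta N s x *
        (A * (nearKer N s h + (fracEta N s h + fracEta N s (x + h) + fracEta N s (x - h)))) := by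
  obtain ⟨q, hq⟩ : ∃ q : ℝ, q = ((N : ℝ) + 2 * s) / 2 := ⟨_, rfl⟩
  have hN : (0 : ℝ) ≤ N := Nat.cast_nonneg N
  have hq0 : 0 < q := by rw [hq]; positivity
  set A₁ : ℝ := 2 * q + q * (q + 1) * 2 ^ (q + 3)
  set A₂ : ℝ := 5 ^ q * (2 + 2 * 4 ^ q)
  have hA₁ : 0 < A₁ := by positivity
  have hA₂ : 0 < A₂ := by positivity
  refine ⟨A₁ + A₂, by positivity, fun x h => ?_⟩
  have p0 := fracEta_pos N s x
  have p1 := fracEta_pos N s (x + h)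
  have p2 := fracEta_pos N s (x - h)
  have p3 := fracEta_pos N s h
  have hk := nearKer_nonneg N s h
  have hr : 0 ≤ ‖h‖ ^ ((N : ℝ) + 2 * s) := by positivity
  rw [abs_div, abs_of_nonneg hr]
  rcases le_total ‖h‖ (1 / 2) with hh | hh
  · rcases eq_or_ne h 0 with rfl | h0
    · have : etaDiff N s x 0 = 0 := by rw [etaDiff, add_zero, sub_zero]; ring
      rw [this, abs_zero, zero_div]
      positivity
    have hn : 0 < ‖h‖ := norm_pos_iff.2 h0
    have e : nearKer N s h = ‖h‖ ^ 2 / ‖h‖ ^ ((N : ℝ) + 2 * s) := by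
      rw [nearKer, indicator_of_mem (show ‖h‖ ∈ Iic (1 / 2 : ℝ) from hh), Real.rpow_sub hn,
        Real.rpow_two]
    calc _ ≤ fracEta N s x * (A₁ * ‖h‖ ^ 2) / ‖h‖ ^ ((N : ℝ) + 2 * s) := by
          gcongr; exact abs_etaDiff_le_near hs0 hq x hh
      _ = fracEta N s x * (A₁ * nearKer N s h) := by rw [e]; ring
      _ ≤ _ := by
        gcongr
        · linarith
        · linarith
  · refine (abs_etaDiff_div_le_far hs0 hq x hh).trans ?_
    refine mul_le_mul_of_nonneg_left ?_ p0.le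
    exact mul_le_mul (by linarith) (by linarith) (by positivity) (by positivity)

/-! ### Symmetrization of the principal value -/

/-- The truncated principal-value integrand in the variable `ξ`. -/
def pvIntegrand (N : ℕ) (s ε : ℝ) (x ξ : ES N) : ℝ :=
  {ξ : ES N | ε < ‖x - ξ‖}.indicator
    (fun ξ => (fracEta N s x - fracEta N s ξ) / ‖x - ξ‖ ^ ((N : ℝ) + 2 * s)) ξ

lemma measurableSet_far (N : ℕ) (ε : ℝ) (x : ES N) : MeasurableSet {ξ : ES N | ε < ‖x - ξ‖} :=
  measurableSet_lt measurable_const (by fun_prop)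

lemma integrable_pvIntegrand {N : ℕ} {s : ℝ} (hs0 : 0 < s) {ε : ℝ} (hε : 0 < ε) (x : ES N) :
    Integrable (pvIntegrand N s ε x) := by
  have hm := (continuous_fracEta N s).measurable
  refine (((integrable_fracEta hs0).comp_sub_left x).const_mul
    ((1 + 1 / ε ^ 2) ^ (((N : ℝ) + 2 * s) / 2))).mono' ?_ (ae_of_all _ fun ξ => ?_)
  · refine Measurable.aestronglyMeasurable (Measurable.indicator ?_ (measurableSet_far N ε x))
    fun_prop
  · have p := fracEta_pos N s (x - ξ)
    by_cases h : ξ ∈ {ξ : ES N | ε < ‖x - ξ‖}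
    · rw [pvIntegrand, indicator_of_mem h, Real.norm_eq_abs, abs_div]
      have hr : 0 ≤ ‖x - ξ‖ ^ ((N : ℝ) + 2 * s) := by positivity
      have h1 : |fracEta N s x - fracEta N s ξ| ≤ 1 := by
        have := fracEta_pos N s x
        have := fracEta_pos N s ξ
        have := fracEta_le_one hs0 x
        have := fracEta_le_one hs0 ξ
        rw [abs_le]; constructor <;> linarith
      rw [abs_of_nonneg hr, div_eq_mul_inv]
      calc _ ≤ 1 * (‖x - ξ‖ ^ ((N : ℝ) + 2 * s))⁻¹ := by gcongr
        _ ≤ _ := by rw [one_mul]; exact inv_norm_rpow_le hs0 hε (le_of_lt h)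
    · rw [pvIntegrand, indicator_of_notMem h, norm_zero]
      positivity

/-- The substitutions `ξ = x ± h`, averaged, replace the first difference by half of the second
difference. -/
lemma setIntegral_eq_symm {N : ℕ} {s : ℝ} (hs0 : 0 < s) {ε : ℝ} (hε : 0 < ε) (x : ES N) :
    ∫ ξ in {ξ : ES N | ε < ‖x - ξ‖},
      (fracEta N s x - fracEta N s ξ) / ‖x - ξ‖ ^ ((N : ℝ) + 2 * s) =
    1 / 2 * ∫ h : ES N, {h : ES N | ε < ‖h‖}.indicator
      (fun h => etaDiff N s x h / ‖h‖ ^ ((N : ℝ) + 2 * s)) h := by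
  have hi := integrable_pvIntegrand hs0 hε x
  have e0 : ∫ ξ in {ξ : ES N | ε < ‖x - ξ‖},
      (fracEta N s x - fracEta N s ξ) / ‖x - ξ‖ ^ ((N : ℝ) + 2 * s) =
      ∫ ξ, pvIntegrand N s ε x ξ := (integral_indicator (measurableSet_far N ε x)).symm
  have e1 := integral_add_left_eq_self (μ := volume) (pvIntegrand N s ε x) x
  have e2 := integral_sub_left_eq_self (pvIntegrand N s ε x) volume x
  have e3 := integral_add (hi.comp_add_left x) (hi.comp_sub_left x)
  rw [e1, e2] at e3
  have e4 : ∀ h : ES N, pvIntegrand N s ε x (x + h) + pvIntegrand N s ε x (x - h) =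
      {h : ES N | ε < ‖h‖}.indicator
        (fun h => etaDiff N s x h / ‖h‖ ^ ((N : ℝ) + 2 * s)) h := by
    intro h
    have n1 : ‖x - (x + h)‖ = ‖h‖ := by rw [sub_add_cancel_left, norm_neg]
    have n2 : ‖x - (x - h)‖ = ‖h‖ := by rw [sub_sub_cancel]
    simp only [pvIntegrand, indicator_apply, mem_ofPred_eq, n1, n2, etaDiff]
    split_ifs
    · ring
    · ring
  simp only [e4] at e3
  rw [e0, e3]; ring

/-! ### Passage to the limit -/

/-- `|(-Δ)^s η(x)| ≤ C η(x)` for all `x`, with `C = C(N,s) > 0`. -/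
theorem fracLap_eta_bound (N : ℕ) (hN : 1 ≤ N) (s : ℝ) (hs0 : 0 < s) (hs1 : s < 1) :
    ∃ C : ℝ, 0 < C ∧ ∀ x : ES N, ∃ v : ℝ,
      HasFracLapAt N s (fracEta N s) x v ∧ |v| ≤ C * fracEta N s x := by
  obtain ⟨A, hA, hbd⟩ := abs_etaDiff_div_le (N := N) hs0
  set I : ℝ := ∫ h : ES N, fracEta N s h with hI
  set K : ℝ := ∫ h : ES N, nearKer N s h with hK
  have hI0 : 0 ≤ I := integral_nonneg fun h => (fracEta_pos N s h).le
  have hK0 : 0 ≤ K := integral_nonneg fun h => nearKer_nonneg N s h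
  refine ⟨|fracC N s| * (1 / 2 * (A * (K + (I + I + I)))) + 1, by positivity, fun x => ?_⟩
  have hm := (continuous_fracEta N s).measurable
  have ie := integrable_fracEta (N := N) hs0
  have ik := integrable_nearKer hN hs1
  have ia := ie.comp_add_left x
  have is := ie.comp_sub_left x
  set B : ES N → ℝ := fun h => fracEta N s x *
    (A * (nearKer N s h + (fracEta N s h + fracEta N s (x + h) + fracEta N s (x - h))))
  have iB : Integrable B := ((ik.add ((ie.add ia).add is)).const_mul A).const_mul _
  have hB : ∫ h, B h = fracEta N s x * (A * (K + (I + I + I))) := by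
    simp only [B]
    have e1 := integral_add ik ((ie.add ia).add is)
    have e2 := integral_add (ie.add ia) is
    have e3 := integral_add ie ia
    rw [integral_add_left_eq_self (μ := volume) _ x] at e3
    rw [integral_sub_left_eq_self _ volume x] at e2
    simp only [Pi.add_apply] at e1 e2
    rw [integral_const_mul, integral_const_mul, e1, e2, e3]
  have hmeas : Measurable fun h : ES N => etaDiff N s x h / ‖h‖ ^ ((N : ℝ) + 2 * s) := by
    unfold etaDiff; fun_prop
  refine ⟨fracC N s * (1 / 2 * ∫ h, etaDiff N s x h / ‖h‖ ^ ((N : ℝ) + 2 * s)), ?_, ?_⟩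
  · refine Tendsto.const_mul _ ?_
    have ht : Tendsto (fun ε : ℝ => ∫ h : ES N, {h : ES N | ε < ‖h‖}.indicator
        (fun h => etaDiff N s x h / ‖h‖ ^ ((N : ℝ) + 2 * s)) h) (nhdsWithin 0 (Ioi 0))
        (nhds (∫ h, etaDiff N s x h / ‖h‖ ^ ((N : ℝ) + 2 * s))) := by
      refine tendsto_integral_filter_of_dominated_convergence B (Eventually.of_forall fun ε => ?_)
        (Eventually.of_forall fun ε => ae_of_all _ fun h => ?_) iB (ae_of_all _ fun h => ?_)
      · exact (hmeas.indicator
          (measurableSet_lt measurable_const measurable_norm)).aestronglyMeasurable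
      · exact (norm_indicator_le_norm_self _ _).trans (hbd x h)
      · refine tendsto_const_nhds.congr' ?_
        rcases eq_or_ne h 0 with rfl | h0
        · have : etaDiff N s x 0 = 0 := by rw [etaDiff, add_zero, sub_zero]; ring
          refine Eventually.of_forall fun ε => ?_
          simp [indicator_apply, this]
        · have hlt : ∀ᶠ ε : ℝ in nhdsWithin 0 (Ioi 0), ε < ‖h‖ :=
            nhdsWithin_le_nhds (Iio_mem_nhds (norm_pos_iff.2 h0))
          filter_upwards [hlt] with ε hε
          rw [indicator_of_mem (show h ∈ {h : ES N | ε < ‖h‖} from hε)]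
    refine (ht.const_mul (1 / 2)).congr' ?_
    filter_upwards [self_mem_nhdsWithin] with ε hε
    exact (setIntegral_eq_symm hs0 hε x).symm
  · have h1 : |∫ h, etaDiff N s x h / ‖h‖ ^ ((N : ℝ) + 2 * s)| ≤ ∫ h, B h := by
      rw [← Real.norm_eq_abs]
      exact norm_integral_le_of_norm_le iB (ae_of_all _ (hbd x))
    have p0 := fracEta_pos N s x
    rw [hB] at h1
    rw [abs_mul, abs_mul, abs_of_pos (by norm_num : (0 : ℝ) < 1 / 2)]
    calc _ ≤ |fracC N s| * (1 / 2 * (fracEta N s x * (A * (K + (I + I + I))))) := by gcongr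
      _ ≤ _ := by nlinarith
end
end

section
/- Let N ≥ 1, 0 < s < 1, m > N, and set ρ_m(x) = (1+|x|²)^{-m/2} and η(x) = (1+|x|²)^{-(N+2s)/2}. Then there exists a constant C > 0 depending only on m, N and s such that |(-Δ)^s ρ_m(x)| ≤ C η(x) for all x ∈ ℝ^N. -/
/-!
Put `A = 1 + ‖x‖²`, `R = √A / 4` and `q = N + 2s`. After the substitution `z = x - ξ` the singular
integral is split at `‖z‖ = R`.

* For `‖z‖ ≤ R`, Taylor expansion gives `ρ_m(x) - ρ_m(x - z) = ℓ(z) + O(A^{-m/2-1} ‖z‖²)` with `ℓ`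
  linear (`near_bound`). The term `ℓ` is odd, so it drops out of every truncated integral, and what
  remains is absolutely integrable because `2 - q > -N`. Hence the principal value is an ordinary
  integral (`hasFracLapAt_of_integrable`), and the near part is `O(A^{-m/2-1} R^{2-2s})`, that is
  `O(A^{-m/2-s})`.
* For `‖z‖ > R`, the term `ρ_m(x)` contributes `O(A^{-m/2} R^{-2s}) = O(A^{-m/2-s})`, and the term
  `ρ_m(x - z)` contributes at most `R^{-q} ∫ ρ_m`, which is a multiple of `A^{-q/2} = η(x)`, `ρ_m`
  being integrable since `m > N`.

As `A ≥ 1` and `m ≥ N`, one has `A^{-m/2-s} ≤ A^{-(N+2s)/2} = η(x)`, so all contributions are bounded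
by a constant times `η(x)`.
-/

open MeasureTheory Filter Set

noncomputable section

/-! ### Second-order expansion of the weight -/

/-- First-order Taylor expansion of `(1 + y) ^ (-p)` at `0`, with a remainder that is uniformly
quadratic for `y` bounded away from `-1`; two applications of the mean value inequality. -/
lemma rpow_taylor (p : ℝ) (hp : 0 < p) :
    ∃ K : ℝ, 0 < K ∧ ∀ y : ℝ, |y| ≤ 9 / 16 → |(1 + y) ^ (-p) - 1 + p * y| ≤ K * y ^ 2 := by
  have hd : ∀ q y : ℝ, |y| ≤ 9 / 16 →
      HasDerivAt (fun y : ℝ => (1 + y) ^ (-q)) (-q * (1 + y) ^ (-q - 1)) y := by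
    intro q y hy
    have h1 : (1 + y) ≠ 0 := by have := (abs_le.1 hy).1; linarith
    have := ((hasDerivAt_id y).const_add 1).rpow_const (p := -q) (Or.inl h1)
    rw [one_mul] at this
    exact this
  set M : ℝ := (7 / 16 : ℝ) ^ (-(p + 1) - 1) with hM
  have hM0 : 0 < M := by positivity
  have hseg : ∀ y t : ℝ, |y| ≤ 9 / 16 → t ∈ Icc (-|y|) |y| → |t| ≤ |y| ∧ |t| ≤ 9 / 16 := by
    intro y t hy ht
    have := abs_le.2 ht
    exact ⟨this, this.trans hy⟩
  have hmem : ∀ y : ℝ, (0 : ℝ) ∈ Icc (-|y|) |y| ∧ y ∈ Icc (-|y|) |y| := fun y =>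
    ⟨by simp, neg_abs_le y, le_abs_self y⟩
  have h1 : ∀ y : ℝ, |y| ≤ 9 / 16 → |(1 + y) ^ (-(p + 1)) - 1| ≤ (p + 1) * M * |y| := by
    intro y hy
    have := (convex_Icc (-|y|) |y|).norm_image_sub_le_of_norm_hasDerivWithin_le
      (f := fun y : ℝ => (1 + y) ^ (-(p + 1))) (C := (p + 1) * M)
      (fun t ht => (hd (p + 1) t (hseg y t hy ht).2).hasDerivWithinAt) ?_ (hmem y).1 (hmem y).2
    · simpa using this
    · intro t ht
      have ht' := (abs_le.1 (hseg y t hy ht).2).1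
      rw [norm_mul, Real.norm_eq_abs, Real.norm_eq_abs, abs_neg, abs_of_pos (by linarith : 0 < p + 1),
        abs_of_nonneg (Real.rpow_nonneg (by linarith) _)]
      refine mul_le_mul_of_nonneg_left ?_ (by linarith)
      exact Real.rpow_le_rpow_of_nonpos (by norm_num) (by linarith) (by linarith)
  refine ⟨p * ((p + 1) * M), by positivity, fun y hy => ?_⟩
  have := (convex_Icc (-|y|) |y|).norm_image_sub_le_of_norm_hasDerivWithin_le
      (f := fun y : ℝ => (1 + y) ^ (-p) - 1 + p * y) (C := p * ((p + 1) * M) * |y|)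
      (f' := fun t => -p * (1 + t) ^ (-p - 1) + p * 1)
      (fun t ht => (((hd p t (hseg y t hy ht).2).sub_const 1).add
        ((hasDerivAt_id t).const_mul p)).hasDerivWithinAt) ?_ (hmem y).1 (hmem y).2
  · simp only [add_zero, Real.one_rpow, sub_self, mul_zero, sub_zero, Real.norm_eq_abs] at this
    rw [mul_assoc, abs_mul_abs_self] at this
    rwa [sq]
  · intro t ht
    obtain ⟨h2, h3⟩ := hseg y t hy ht
    have h4 : -p * (1 + t) ^ (-p - 1) + p * 1 = -(p * ((1 + t) ^ (-(p + 1)) - 1)) := by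
      rw [neg_add' p 1]; ring
    rw [h4, norm_neg, norm_mul, Real.norm_eq_abs, Real.norm_eq_abs, abs_of_pos hp, mul_assoc]
    refine mul_le_mul_of_nonneg_left ((h1 t h3).trans ?_) hp.le
    gcongr

/-- With `A = 1 + ‖x‖²`, the difference `ρ_m(x) - ρ_m(x - z)` agrees with its linear part in `z` up
to `K A^{-m/2-1} ‖z‖²` as long as `‖z‖ ≤ √A / 4`. The factor `A⁻¹` gained over `ρ_m(x)` is what makes
the local part of the singular integral decay. -/
lemma near_bound (N : ℕ) (m : ℝ) (hm : 0 < m) :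
    ∃ K : ℝ, 0 < K ∧ ∀ x z : ES N, ‖z‖ ≤ √(1 + ‖x‖ ^ 2) / 4 →
      |fracRho N m x - fracRho N m (x - z)
          + m * (1 + ‖x‖ ^ 2) ^ (-(m / 2) - 1) * inner ℝ x z|
        ≤ K * (1 + ‖x‖ ^ 2) ^ (-(m / 2) - 1) * ‖z‖ ^ 2 := by
  obtain ⟨K, hK, hT⟩ := rpow_taylor (m / 2) (by positivity)
  refine ⟨m / 2 + K * 6, by positivity, fun x z hz => ?_⟩
  set A : ℝ := 1 + ‖x‖ ^ 2 with hA
  have hA0 : 0 < A := by positivity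
  set D : ℝ := √A with hD
  have hD2 : D ^ 2 = A := Real.sq_sqrt hA0.le
  have hD0 : 0 < D := Real.sqrt_pos.2 hA0
  have hxD : ‖x‖ ≤ D := Real.le_sqrt_of_sq_le (by rw [hA]; linarith)
  set w : ℝ := inner ℝ x z with hw
  have hwb : |w| ≤ ‖x‖ * ‖z‖ := abs_real_inner_le_norm x z
  have hwD : |w| ≤ D * ‖z‖ := hwb.trans (by gcongr)
  set y : ℝ := (‖z‖ ^ 2 - 2 * w) / A with hy
  -- `1 + ‖x - z‖² = A (1 + y)`, so the claim is the expansion of `(1 + y) ^ (-m/2)` rescaled by `A`.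
  have hyA : A * y = ‖z‖ ^ 2 - 2 * w := by rw [hy]; field_simp
  have hexp : 1 + ‖x - z‖ ^ 2 = A * (1 + y) := by
    rw [mul_add, hyA, norm_sub_sq_real]; ring
  have hyb : |y| ≤ 9 / 4 * (‖z‖ / D) := by
    rw [hy, abs_div, abs_of_pos hA0, div_le_iff₀ hA0]
    have : 9 / 4 * (‖z‖ / D) * A = 9 / 4 * (‖z‖ * D) := by rw [← hD2]; field_simp
    rw [this]
    refine (abs_sub _ _).trans ?_
    rw [abs_mul, abs_of_nonneg (sq_nonneg ‖z‖), abs_of_pos (by norm_num : (0 : ℝ) < 2)]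
    nlinarith [norm_nonneg z]
  have hzD : ‖z‖ / D ≤ 1 / 4 := by
    rw [div_le_iff₀ hD0]; linarith
  have hy1 : |y| ≤ 9 / 16 := by linarith
  have hy2 : A * y ^ 2 ≤ 6 * ‖z‖ ^ 2 := by
    have h1 : y ^ 2 ≤ (9 / 4 * (‖z‖ / D)) ^ 2 := by
      rw [← sq_abs y]; gcongr
    have h2 : A * (9 / 4 * (‖z‖ / D)) ^ 2 = 81 / 16 * ‖z‖ ^ 2 := by
      rw [← hD2]; field_simp; ring
    nlinarith [mul_le_mul_of_nonneg_left h1 hA0.le, sq_nonneg ‖z‖]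
  have hyn : 0 ≤ 1 + y := by linarith [(abs_le.1 hy1).1]
  have hApow : A ^ (-(m / 2)) = A * A ^ (-(m / 2) - 1) := by
    rw [Real.rpow_sub_one hA0.ne']; field_simp
  set B := A ^ (-(m / 2) - 1) with hB
  have hB0 : 0 < B := by positivity
  unfold fracRho
  rw [hexp, Real.mul_rpow hA0.le hyn, ← hA, hApow]
  have key : A * B - A * B * (1 + y) ^ (-(m / 2)) + m * B * w
      = B * (m / 2 * ‖z‖ ^ 2 - A * ((1 + y) ^ (-(m / 2)) - 1 + m / 2 * y)) := by
    linear_combination B * (m / 2) * hyA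
  rw [key, abs_mul, abs_of_pos hB0]
  have h5 : |m / 2 * ‖z‖ ^ 2 - A * ((1 + y) ^ (-(m / 2)) - 1 + m / 2 * y)|
      ≤ m / 2 * ‖z‖ ^ 2 + A * (K * y ^ 2) := by
    refine (abs_sub _ _).trans ?_
    rw [abs_of_nonneg (by positivity : 0 ≤ m / 2 * ‖z‖ ^ 2), abs_mul A, abs_of_pos hA0]
    gcongr
    exact hT y hy1
  calc _ ≤ B * (m / 2 * ‖z‖ ^ 2 + A * (K * y ^ 2)) := by gcongr
    _ ≤ B * (m / 2 * ‖z‖ ^ 2 + K * (6 * ‖z‖ ^ 2)) := by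
        have : A * (K * y ^ 2) = K * (A * y ^ 2) := by ring
        rw [this]; gcongr
    _ = _ := by ring

/-! ### Integrals of radial powers -/

lemma radial_scale (N : ℕ) (f : ℝ → ℝ) {R : ℝ} (hR : 0 < R) :
    ∫ z : ES N, f (‖z‖ / R) = R ^ N * ∫ z : ES N, f ‖z‖ := by
  have := Measure.integral_comp_inv_smul_of_nonneg (volume : Measure (ES N))
    (fun z => f ‖z‖) hR.le
  simp only [norm_smul, norm_inv, Real.norm_eq_abs, abs_of_pos hR, finrank_euclideanSpace,
    Fintype.card_fin, smul_eq_mul] at this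
  rw [← this]
  simp only [div_eq_inv_mul]

lemma radial_scale_integrable (N : ℕ) (f : ℝ → ℝ) {R : ℝ} (hR : 0 < R)
    (hf : Integrable (fun z : ES N => f ‖z‖)) :
    Integrable (fun z : ES N => f (‖z‖ / R)) := by
  have := hf.comp_smul (inv_ne_zero hR.ne')
  simpa only [norm_smul, norm_inv, Real.norm_eq_abs, abs_of_pos hR, div_eq_inv_mul] using this

lemma integrable_near (N : ℕ) (hN : 1 ≤ N) (q : ℝ) (hq : -(N : ℝ) < q) :
    Integrable (fun z : ES N => (Iic 1).indicator (fun r : ℝ => r ^ q) ‖z‖) := by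
  have : Nonempty (Fin N) := ⟨⟨0, hN⟩⟩
  rw [integrable_fun_norm_addHaar]
  have h : IntegrableOn (fun r : ℝ => r ^ ((N : ℝ) - 1 + q)) (Ioc 0 1) :=
    (intervalIntegrable_iff_integrableOn_Ioc_of_le zero_le_one).1
      (intervalIntegral.intervalIntegrable_rpow' (by linarith))
  rw [← integrable_indicator_iff measurableSet_Ioc] at h
  rw [← integrable_indicator_iff measurableSet_Ioi]
  refine h.congr (Eventually.of_forall fun r => ?_)
  by_cases h0 : 0 < r <;> by_cases h1 : r ≤ 1 <;> simp [indicator, h0, h1]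
  rw [Real.rpow_add h0, ← Real.rpow_natCast, Nat.cast_sub hN, Nat.cast_one]

lemma integrable_far (N : ℕ) (hN : 1 ≤ N) (q : ℝ) (hq : q < -(N : ℝ)) :
    Integrable (fun z : ES N => (Ioi 1).indicator (fun r : ℝ => r ^ q) ‖z‖) := by
  have : Nonempty (Fin N) := ⟨⟨0, hN⟩⟩
  rw [integrable_fun_norm_addHaar]
  have h : IntegrableOn (fun r : ℝ => r ^ ((N : ℝ) - 1 + q)) (Ioi 1) :=
    integrableOn_Ioi_rpow_of_lt (by linarith) one_pos
  rw [← integrable_indicator_iff measurableSet_Ioi] at h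
  rw [← integrable_indicator_iff measurableSet_Ioi]
  refine h.congr (Eventually.of_forall fun r => ?_)
  by_cases h1 : 1 < r
  · have h0 : 0 < r := by linarith
    simp [indicator, h0, h1]
    rw [Real.rpow_add h0, ← Real.rpow_natCast, Nat.cast_sub hN, Nat.cast_one]
  · simp [indicator, h1]

/-! ### The principal value -/

/-- Adding to `u x - u (x - z)` a linear term in `z`, cut off to the ball `‖z‖ ≤ R`, does not change
any truncated integral, because that term is odd. If the corrected integrand is absolutely
integrable, the principal value therefore exists and equals its Lebesgue integral. -/
lemma hasFracLapAt_of_integrable (N : ℕ) (hN : 1 ≤ N) (s : ℝ) (u : ES N → ℝ) (x b : ES N) (R : ℝ)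
    (hg : Integrable (fun z : ES N =>
      (u x - u (x - z) + (if ‖z‖ ≤ R then inner ℝ b z else 0)) / ‖z‖ ^ ((N : ℝ) + 2 * s))) :
    HasFracLapAt N s u x (fracC N s * ∫ z : ES N,
      (u x - u (x - z) + (if ‖z‖ ≤ R then inner ℝ b z else 0)) / ‖z‖ ^ ((N : ℝ) + 2 * s)) := by
  have : Nonempty (Fin N) := ⟨⟨0, hN⟩⟩
  set q : ℝ := (N : ℝ) + 2 * s with hq
  set g : ES N → ℝ := fun z =>
    (u x - u (x - z) + (if ‖z‖ ≤ R then inner ℝ b z else 0)) / ‖z‖ ^ q with hgdef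
  have hmeas : ∀ ε : ℝ, MeasurableSet {z : ES N | ε < ‖z‖} := fun ε =>
    measurableSet_lt measurable_const measurable_norm
  have hcover : AECover (volume : Measure (ES N)) (nhdsWithin (0 : ℝ) (Ioi 0))
      (fun ε => {z : ES N | ε < ‖z‖}) := by
    refine ⟨?_, hmeas⟩
    have h0 : ∀ᵐ z : ES N, z ≠ 0 := compl_mem_ae_iff.2 (measure_singleton 0)
    filter_upwards [h0] with z hz
    exact mem_nhdsWithin_of_mem_nhds (Iio_mem_nhds (norm_pos_iff.2 hz))
  refine Tendsto.const_mul _ ?_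
  refine (hcover.integral_tendsto_of_countably_generated hg).congr' ?_
  filter_upwards [self_mem_nhdsWithin] with ε hε
  have hε : 0 < ε := hε
  set l : ES N → ℝ := fun z => (if ‖z‖ ≤ R then inner ℝ b z else 0) / ‖z‖ ^ q with hl
  set f : ES N → ℝ := fun z => (u x - u (x - z)) / ‖z‖ ^ q with hf
  -- Substitute `z = x - ξ`.
  have hchange : ∫ ξ in {ξ : ES N | ε < ‖x - ξ‖}, (u x - u ξ) / ‖x - ξ‖ ^ q
      = ∫ z in {z : ES N | ε < ‖z‖}, f z := by
    rw [← integral_indicator (hmeas ε), ← integral_indicator (measurableSet_lt measurable_const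
      (by fun_prop)), ← integral_sub_left_eq_self _ volume x]
    congr 1
    ext ξ
    simp [indicator, hf]
  have hlint : IntegrableOn l {z : ES N | ε < ‖z‖} := by
    have hK : IsCompact (Metric.closedBall (0 : ES N) R ∩ {z : ES N | ε ≤ ‖z‖}) :=
      (isCompact_closedBall 0 R).inter_right (isClosed_le continuous_const continuous_norm)
    have h1 : IntegrableOn (fun z : ES N => inner ℝ b z / ‖z‖ ^ q)
        (Metric.closedBall (0 : ES N) R ∩ {z : ES N | ε ≤ ‖z‖}) := by
      refine ContinuousOn.integrableOn_compact hK ?_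
      intro z hz
      have hz0 : 0 < ‖z‖ := hε.trans_le hz.2
      refine ContinuousAt.continuousWithinAt ?_
      refine ContinuousAt.div (by fun_prop) ?_ (Real.rpow_pos_of_pos hz0 q).ne'
      exact continuous_norm.continuousAt.rpow_const (Or.inl hz0.ne')
    rw [← integrable_indicator_iff hK.measurableSet] at h1
    have h2 := h1.indicator (hmeas ε)
    rw [← integrable_indicator_iff (hmeas ε)]
    refine h2.congr (Eventually.of_forall fun z => ?_)
    by_cases hz : ε < ‖z‖
    · by_cases hz' : ‖z‖ ≤ R <;> simp [indicator, hl, hz, hz', hz.le]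
    · simp [indicator, hz]
  have hlzero : ∫ z in {z : ES N | ε < ‖z‖}, l z = 0 := by
    rw [← integral_indicator (hmeas ε)]
    have h1 := integral_neg_eq_self ({z : ES N | ε < ‖z‖}.indicator l) volume
    have h2 : ∀ z : ES N, {z : ES N | ε < ‖z‖}.indicator l (-z)
        = - {z : ES N | ε < ‖z‖}.indicator l z := by
      intro z
      by_cases hz : ε < ‖z‖ <;> by_cases hz' : ‖z‖ ≤ R <;> simp [indicator, hl, hz, hz', neg_div]
    simp only [h2, integral_neg] at h1
    linarith
  have hfg : ∀ z, f z = g z - l z := by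
    intro z; simp only [hf, hgdef, hl]; ring
  rw [hchange]
  simp only [hfg]
  rw [integral_sub hg.integrableOn hlint, hlzero, sub_zero]

/-! ### Decay of the fractional Laplacian -/

lemma fracRho_integrable (N : ℕ) (m : ℝ) (hm : (N : ℝ) < m) : Integrable (fracRho N m) := by
  have := integrable_rpow_neg_one_add_norm_sq (E := ES N) (μ := volume) (r := m) (by simpa using hm)
  simp only [neg_div] at this
  exact this

lemma fracRho_pos (N : ℕ) (m : ℝ) (x : ES N) : 0 < fracRho N m x := by
  unfold fracRho; positivity

lemma fracRho_measurable (N : ℕ) (m : ℝ) : Measurable (fracRho N m) := by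
  unfold fracRho; fun_prop

/-- Pointwise majorant of the corrected integrand. Inside the ball of radius `R` the quadratic bound
leaves the integrable singularity `‖z‖ ^ (2 - q)`; outside, `ρ_m(x)` is paired with `‖z‖ ^ (-q)` and
`ρ_m(x - z)` with its bound `R ^ (-q)`. The powers are written through `‖z‖ / R`, so that
`radial_scale` integrates them. -/
lemma integrand_bound (N : ℕ) (m q K R : ℝ) (hR : 0 < R) (hq : 0 < q) (hK : 0 ≤ K)
    (x b z : ES N)
    (hnear : ‖z‖ ≤ R → |fracRho N m x - fracRho N m (x - z) + inner ℝ b z| ≤ K * ‖z‖ ^ 2) :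
    |(fracRho N m x - fracRho N m (x - z) + (if ‖z‖ ≤ R then inner ℝ b z else 0)) / ‖z‖ ^ q|
      ≤ K * R ^ (2 - q) * (Iic 1).indicator (fun r : ℝ => r ^ (2 - q)) (‖z‖ / R)
        + fracRho N m x * R ^ (-q) * (Ioi 1).indicator (fun r : ℝ => r ^ (-q)) (‖z‖ / R)
        + R ^ (-q) * fracRho N m (x - z) := by
  have hx := fracRho_pos N m x
  have hxz := fracRho_pos N m (x - z)
  have hRq : 0 < R ^ (-q) := by positivity
  by_cases hzR : ‖z‖ ≤ R
  · have h1 : ‖z‖ / R ≤ 1 := (div_le_one hR).2 hzR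
    simp only [hzR, if_true, indicator, mem_Iic, mem_Ioi, h1, not_lt.2 h1, if_false, mul_zero,
      add_zero]
    refine le_trans ?_ (le_add_of_nonneg_right (by positivity))
    rcases eq_or_lt_of_le (norm_nonneg z) with h0 | h0
    -- at `z = 0` the quotient is `0` by the convention `_ / 0 = 0`
    · rw [← h0, Real.zero_rpow hq.ne', div_zero, abs_zero]
      positivity
    · rw [mul_assoc, ← Real.mul_rpow hR.le (by positivity), mul_div_cancel₀ _ hR.ne', abs_div,
        abs_of_pos (Real.rpow_pos_of_pos h0 q), Real.rpow_sub h0, ← mul_div_assoc, Real.rpow_two]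
      gcongr
      exact hnear hzR
  · have h1 : 1 < ‖z‖ / R := (one_lt_div hR).2 (not_le.1 hzR)
    have h0 : 0 < ‖z‖ := hR.trans (not_le.1 hzR)
    simp only [hzR, if_true, indicator, mem_Iic, mem_Ioi, h1, not_le.2 h1, if_false, mul_zero,
      add_zero, zero_add]
    rw [mul_assoc, ← Real.mul_rpow hR.le (by positivity), mul_div_cancel₀ _ hR.ne', abs_div,
      abs_of_pos (Real.rpow_pos_of_pos h0 q), div_eq_mul_inv, ← Real.rpow_neg h0.le]
    have h2 : |fracRho N m x - fracRho N m (x - z)| ≤ fracRho N m x + fracRho N m (x - z) := by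
      rw [abs_le]; constructor <;> linarith
    have h3 : ‖z‖ ^ (-q) ≤ R ^ (-q) :=
      Real.rpow_le_rpow_of_nonpos hR (not_le.1 hzR).le (by linarith)
    calc _ ≤ (fracRho N m x + fracRho N m (x - z)) * ‖z‖ ^ (-q) := by gcongr
      _ = fracRho N m x * ‖z‖ ^ (-q) + ‖z‖ ^ (-q) * fracRho N m (x - z) := by ring
      _ ≤ _ := by gcongr

/-- For `m > N`, `|(-Δ)^s ρ_m(x)| ≤ C η(x)` for all `x`, with
`C = C(m,N,s) > 0`. -/
theorem fracLap_rho_bound (N : ℕ) (hN : 1 ≤ N) (s : ℝ) (hs0 : 0 < s) (hs1 : s < 1)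
    (m : ℝ) (hm : (N : ℝ) < m) :
    ∃ C : ℝ, 0 < C ∧ ∀ x : ES N, ∃ v : ℝ,
      HasFracLapAt N s (fracRho N m) x v ∧ |v| ≤ C * fracEta N s x := by
  have hm0 : 0 < m := lt_of_le_of_lt N.cast_nonneg hm
  obtain ⟨K, hK, hnear⟩ := near_bound N m hm0
  set q : ℝ := (N : ℝ) + 2 * s with hq
  have hq0 : 0 < q := by positivity
  have hi1 := integrable_near N hN (2 - q) (by rw [hq]; linarith)
  have hi2 := integrable_far N hN (-q) (by rw [hq]; linarith)
  have hi3 := fracRho_integrable N m hm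
  set J1 := ∫ z : ES N, (Iic 1).indicator (fun r : ℝ => r ^ (2 - q)) ‖z‖ with hJ1
  set J2 := ∫ z : ES N, (Ioi 1).indicator (fun r : ℝ => r ^ (-q)) ‖z‖ with hJ2
  set I := ∫ z : ES N, fracRho N m z with hI
  have hJ1n : 0 ≤ J1 := integral_nonneg fun z =>
    indicator_apply_nonneg fun _ => Real.rpow_nonneg (norm_nonneg z) _
  have hJ2n : 0 ≤ J2 := integral_nonneg fun z =>
    indicator_apply_nonneg fun _ => Real.rpow_nonneg (norm_nonneg z) _
  have hIn : 0 ≤ I := integral_nonneg fun z => (fracRho_pos N m z).le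
  set C0 : ℝ := K * J1 * (4 : ℝ)⁻¹ ^ (2 - 2 * s) + J2 * (4 : ℝ)⁻¹ ^ (-(2 * s))
    + I * (4 : ℝ)⁻¹ ^ (-q) with hC0
  have hC0n : 0 ≤ C0 := by positivity
  refine ⟨|fracC N s| * C0 + 1, by positivity, fun x => ?_⟩
  set A : ℝ := 1 + ‖x‖ ^ 2 with hA
  have hA1 : 1 ≤ A := by rw [hA]; nlinarith [sq_nonneg ‖x‖]
  have hA0 : 0 < A := by linarith
  set R : ℝ := √A / 4 with hR
  have hR0 : 0 < R := by positivity
  set B : ℝ := A ^ (-(m / 2) - 1) with hB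
  have hB0 : 0 < B := by positivity
  set b : ES N := (m * B) • x with hb
  set g : ES N → ℝ := fun z => (fracRho N m x - fracRho N m (x - z)
    + (if ‖z‖ ≤ R then inner ℝ b z else 0)) / ‖z‖ ^ q with hg
  set G : ES N → ℝ := fun z =>
    K * B * R ^ (2 - q) * (Iic 1).indicator (fun r : ℝ => r ^ (2 - q)) (‖z‖ / R)
        + fracRho N m x * R ^ (-q) * (Ioi 1).indicator (fun r : ℝ => r ^ (-q)) (‖z‖ / R)
        + R ^ (-q) * fracRho N m (x - z) with hG
  have hgG : ∀ z, ‖g z‖ ≤ G z := by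
    intro z
    refine integrand_bound N m q (K * B) R hR0 hq0 (by positivity) x b z fun hz => ?_
    rw [hb, real_inner_smul_left]
    exact hnear x z hz
  have hG1 := (radial_scale_integrable N _ hR0 hi1).const_mul (K * B * R ^ (2 - q))
  have hG2 := (radial_scale_integrable N _ hR0 hi2).const_mul (fracRho N m x * R ^ (-q))
  have hG3 := (hi3.comp_sub_left x).const_mul (R ^ (-q))
  have hGint : Integrable G := (hG1.add hG2).add hG3
  have hgm : Measurable g := by
    have hu := fracRho_measurable N m
    refine Measurable.div (Measurable.add (by fun_prop) ?_) (by fun_prop)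
    exact Measurable.ite (measurableSet_le measurable_norm measurable_const) (by fun_prop)
      measurable_const
  have hgint : Integrable g := hGint.mono' hgm.aestronglyMeasurable (Eventually.of_forall hgG)
  refine ⟨fracC N s * ∫ z, g z, hasFracLapAt_of_integrable N hN s _ x b R hgint, ?_⟩
  have hGval : ∫ z, G z = K * B * R ^ (2 - q) * (R ^ N * J1)
      + fracRho N m x * R ^ (-q) * (R ^ N * J2) + R ^ (-q) * I := by
    rw [show ∫ z, G z = _ from integral_add (hG1.add hG2) hG3,
      show ∫ z, _ = _ from integral_add hG1 hG2, integral_const_mul, integral_const_mul,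
      integral_const_mul, radial_scale N _ hR0, radial_scale N _ hR0,
      integral_sub_left_eq_self (fracRho N m) volume x]
  have hRpow : ∀ a : ℝ, R ^ a = A ^ (a / 2) * (4 : ℝ)⁻¹ ^ a := by
    intro a
    rw [hR, div_eq_mul_inv, Real.mul_rpow (by positivity) (by norm_num), Real.sqrt_eq_rpow,
      ← Real.rpow_mul hA0.le]
    congr 2; ring
  have hη : fracEta N s x = A ^ (-(q / 2)) := rfl
  have hρ : fracRho N m x = A ^ (-(m / 2)) := rfl
  -- `m ≥ N` turns the rate of the near part and of the `ρ_m(x)` tail into that of `η`.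
  have hpow : A ^ (-(m / 2) - s) ≤ A ^ (-(q / 2)) :=
    Real.rpow_le_rpow_of_exponent_le hA1 (by rw [hq]; linarith)
  have e1 : B * (R ^ (2 - q) * R ^ N) = A ^ (-(m / 2) - s) * (4 : ℝ)⁻¹ ^ (2 - 2 * s) := by
    rw [← Real.rpow_natCast R N, ← Real.rpow_add hR0, hRpow, ← mul_assoc, hB, ← Real.rpow_add hA0,
      hq]
    congr 2 <;> ring
  have e2 : fracRho N m x * (R ^ (-q) * R ^ N)
      = A ^ (-(m / 2) - s) * (4 : ℝ)⁻¹ ^ (-(2 * s)) := by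
    rw [← Real.rpow_natCast R N, ← Real.rpow_add hR0, hRpow, ← mul_assoc, hρ, ← Real.rpow_add hA0,
      hq]
    congr 2 <;> ring
  have e3 : R ^ (-q) = A ^ (-(q / 2)) * (4 : ℝ)⁻¹ ^ (-q) := by
    rw [hRpow, neg_div]
  have hGle : ∫ z, G z ≤ C0 * A ^ (-(q / 2)) := by
    calc ∫ z, G z = K * J1 * (B * (R ^ (2 - q) * R ^ N))
          + J2 * (fracRho N m x * (R ^ (-q) * R ^ N)) + I * R ^ (-q) := by rw [hGval]; ring
      _ = K * J1 * (A ^ (-(m / 2) - s) * (4 : ℝ)⁻¹ ^ (2 - 2 * s))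
          + J2 * (A ^ (-(m / 2) - s) * (4 : ℝ)⁻¹ ^ (-(2 * s)))
          + I * (A ^ (-(q / 2)) * (4 : ℝ)⁻¹ ^ (-q)) := by rw [e1, e2, e3]
      _ ≤ K * J1 * (A ^ (-(q / 2)) * (4 : ℝ)⁻¹ ^ (2 - 2 * s))
          + J2 * (A ^ (-(q / 2)) * (4 : ℝ)⁻¹ ^ (-(2 * s)))
          + I * (A ^ (-(q / 2)) * (4 : ℝ)⁻¹ ^ (-q)) := by gcongr
      _ = _ := by rw [hC0]; ring
  have hgle : |∫ z, g z| ≤ C0 * A ^ (-(q / 2)) :=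
    (norm_integral_le_of_norm_le hGint (Eventually.of_forall hgG)).trans hGle
  rw [abs_mul, hη]
  have : 0 < A ^ (-(q / 2)) := by positivity
  nlinarith [mul_le_mul_of_nonneg_left hgle (abs_nonneg (fracC N s))]
end
end

section
/- Let N ≥ 1, 0 < s < 1, m > N, and ρ_m(x) = (1+|x|²)^{-m/2}. Then for every x ∈ ℝ^N with |x| ≤ 1, |(-Δ)^s ρ_m(x)| ≤ c_{N,s} |S^{N-1}| ( m(2m+3) 2^{1-2s}/(1-s) + 2^{-2s}/s ), where |S^{N-1}| is the surface area of the unit sphere in ℝ^N. -/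
/-!
The substitutions `ξ = x + y` and `ξ = x - y`, averaged, turn the truncated integral into the
integral over `ε < |y|` of `(2ρ(x) - ρ(x+y) - ρ(x-y)) / (2|y|^{N+2s})`
(`setIntegral_eq_integral_symInt`).

The numerator is controlled as follows. With `t = 1 + |·|²` the function `ρ_m` is `t^{-a}`,
`a = m/2`, and the values of `t` at `x ± y` are `p + r ± d` with `p = 1 + |x|²`, `r = |y|²`,
`d = 2⟨x, y⟩`. On `[1, ∞)` both `t^{-a}` and `a(a+1)t²/2 - t^{-a}` are convex; comparing with the
midpoint `p + r`, and `(p+r)^{-a}` with `p^{-a}`, bounds the second difference of `ρ_m` by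
`m(m+2)|y|²` when `|x| ≤ 1` (`fracRho_second_diff_abs_le`). Since `0 < ρ_m ≤ 1`, half of the second difference is also at
most `1`.

Using the first bound for `|y| ≤ 2` and the second for `|y| > 2` gives an integrable radial
majorant. Dominated convergence then yields the principal value (`hasFracLapAt_fracRho`), and
polar coordinates evaluate the integral of the majorant (`integral_radMaj`) as
`|S^{N-1}| (m(m+2) 2^{-2s}/(1-s) + 2^{-2s}/(2s))`, which is below the claimed bound.
-/

open MeasureTheory Filter Set

noncomputable section

/-! ### The second difference of `ρ_m` -/

lemma convexOn_rpow_neg_Ici_one {a : ℝ} (ha : 0 < a) :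
    ConvexOn ℝ (Ici 1) (fun t : ℝ => t ^ (-a)) := by
  have hd : ∀ (b : ℝ), ∀ t ∈ interior (Ici (1 : ℝ)),
      HasDerivWithinAt (fun t : ℝ => t ^ b) (b * t ^ (b - 1)) (interior (Ici 1)) t := by
    intro b t ht
    rw [interior_Ici] at ht
    have ht' : t ≠ 0 := (lt_trans zero_lt_one ht).ne'
    exact (Real.hasDerivAt_rpow_const (Or.inl ht')).hasDerivWithinAt
  refine convexOn_of_hasDerivWithinAt2_nonneg (convex_Ici 1) ?_ (hd (-a))
    (fun t ht => (hd (-a - 1) t ht).const_mul (-a)) ?_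
  · intro t ht
    have : t ≠ 0 := (lt_of_lt_of_le zero_lt_one ht).ne'
    exact (Real.continuousAt_rpow_const _ _ (Or.inl this)).continuousWithinAt
  · intro t ht
    rw [interior_Ici] at ht
    have : 0 ≤ t ^ (-a - 1 - 1) := Real.rpow_nonneg (lt_trans zero_lt_one ht).le _
    have h2 : 0 ≤ a * (a + 1) * t ^ (-a - 1 - 1) := by positivity
    linarith

/-- On `[1, ∞)` the second derivative `a(a+1) t^{-a-2}` of `t^{-a}` is at most `a(a+1)`. -/
lemma convexOn_sq_sub_rpow_neg {a : ℝ} (ha : 0 < a) :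
    ConvexOn ℝ (Ici 1) (fun t : ℝ => a * (a + 1) / 2 * t ^ 2 - t ^ (-a)) := by
  have hd : ∀ (b : ℝ), ∀ t ∈ interior (Ici (1 : ℝ)),
      HasDerivWithinAt (fun t : ℝ => t ^ b) (b * t ^ (b - 1)) (interior (Ici 1)) t := by
    intro b t ht
    rw [interior_Ici] at ht
    have ht' : t ≠ 0 := (lt_trans zero_lt_one ht).ne'
    exact (Real.hasDerivAt_rpow_const (Or.inl ht')).hasDerivWithinAt
  refine convexOn_of_hasDerivWithinAt2_nonneg (convex_Ici 1)
    (f' := fun t => a * (a + 1) / 2 * (2 * t) - (-a) * t ^ (-a - 1))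
    (f'' := fun t => a * (a + 1) / 2 * 2 - (-a) * ((-a - 1) * t ^ (-a - 1 - 1))) ?_ ?_ ?_ ?_
  · intro t ht
    have : t ≠ 0 := (lt_of_lt_of_le zero_lt_one ht).ne'
    refine ContinuousWithinAt.sub (by fun_prop) ?_
    exact (Real.continuousAt_rpow_const _ _ (Or.inl this)).continuousWithinAt
  · intro t ht
    have h := (((hasDerivAt_pow 2 t).const_mul (a * (a + 1) / 2)).hasDerivWithinAt
      (s := interior (Ici 1))).sub (hd (-a) t ht)
    refine h.congr_deriv ?_ |>.congr (fun _ _ => rfl) rfl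
    norm_num
  · intro t ht
    have h := (((hasDerivAt_id t).const_mul 2).const_mul (a * (a + 1) / 2)).hasDerivWithinAt
      (s := interior (Ici 1))
    have h' := h.sub ((hd (-a - 1) t ht).const_mul (-a))
    refine h'.congr_deriv ?_ |>.congr (fun _ _ => rfl) rfl
    norm_num
  · intro t ht
    rw [interior_Ici] at ht
    have h1 : t ^ (-a - 1 - 1) ≤ 1 := Real.rpow_le_one_of_one_le_of_nonpos (le_of_lt ht)
      (by linarith)
    have h2 : 0 ≤ a * (a + 1) * (1 - t ^ (-a - 1 - 1)) := by
      have : 0 ≤ 1 - t ^ (-a - 1 - 1) := by linarith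
      positivity
    linarith

lemma rpow_neg_tangent {a p r : ℝ} (ha : 0 < a) (hp : 1 ≤ p) (hr : 0 ≤ r) :
    p ^ (-a) - a * r ≤ (p + r) ^ (-a) := by
  have hp0 : 0 < p := by linarith
  have e : p + r = p * (1 + r / p) := by field_simp
  have h1 : 0 ≤ r / p := by positivity
  have hrp : r / p ≤ r := div_le_self hr hp
  rw [e, Real.mul_rpow hp0.le (by linarith)]
  have h2 : 1 - a * r ≤ (1 + r / p) ^ (-a) := by
    rw [Real.rpow_def_of_pos (by linarith)]
    have h3 := Real.add_one_le_exp (Real.log (1 + r / p) * -a)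
    have h4 := Real.log_le_sub_one_of_pos (show 0 < 1 + r / p by linarith)
    have : a * Real.log (1 + r / p) ≤ a * r := by
      apply mul_le_mul_of_nonneg_left _ ha.le
      linarith
    linarith
  have h5 : p ^ (-a) ≤ 1 := Real.rpow_le_one_of_one_le_of_nonpos hp (by linarith)
  have h6 : 0 ≤ p ^ (-a) := Real.rpow_nonneg hp0.le _
  have h7 : 0 ≤ a * r := by positivity
  nlinarith

/-- Second difference of `t^{-a}` along an asymmetric pair `p + r ± d`: convexity of `t^{-a}` and
its tangent at `p` give the lower bound, convexity of `a(a+1)t²/2 - t^{-a}` gives the upper one. -/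
lemma rpow_neg_second_diff {a p r d : ℝ} (ha : 0 < a) (hp : 1 ≤ p) (hr : 0 ≤ r)
    (h1 : 1 ≤ p + r + d) (h2 : 1 ≤ p + r - d) :
    -(2 * a * r) ≤ (p + r + d) ^ (-a) + (p + r - d) ^ (-a) - 2 * p ^ (-a) ∧
      (p + r + d) ^ (-a) + (p + r - d) ^ (-a) - 2 * p ^ (-a) ≤ a * (a + 1) * d ^ 2 := by
  have e : (1 / 2 : ℝ) * (p + r + d) + 1 / 2 * (p + r - d) = p + r := by ring
  have c1 := (convexOn_rpow_neg_Ici_one ha).2 (mem_Ici.2 h1) (mem_Ici.2 h2)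
    (show (0 : ℝ) ≤ 1 / 2 by norm_num) (show (0 : ℝ) ≤ 1 / 2 by norm_num) (by norm_num)
  have c2 := (convexOn_sq_sub_rpow_neg ha).2 (mem_Ici.2 h1) (mem_Ici.2 h2)
    (show (0 : ℝ) ≤ 1 / 2 by norm_num) (show (0 : ℝ) ≤ 1 / 2 by norm_num) (by norm_num)
  simp only [smul_eq_mul, e] at c1 c2
  have t := rpow_neg_tangent ha hp hr
  have mono : (p + r) ^ (-a) ≤ p ^ (-a) :=
    Real.rpow_le_rpow_of_nonpos (by linarith) (by linarith) (by linarith)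
  constructor
  · linarith
  · nlinarith

lemma fracRho_le_one (N : ℕ) {m : ℝ} (hm : 0 < m) (x : ES N) : fracRho N m x ≤ 1 :=
  Real.rpow_le_one_of_one_le_of_nonpos (by nlinarith [sq_nonneg ‖x‖]) (by linarith)

lemma continuous_fracRho (N : ℕ) (m : ℝ) : Continuous (fracRho N m) := by
  unfold fracRho
  refine Continuous.rpow_const (by fun_prop) fun x => Or.inl ?_
  positivity

lemma fracRho_second_diff_abs_le (N : ℕ) {m : ℝ} (hm : 0 < m) {x : ES N} (hx : ‖x‖ ≤ 1)
    (y : ES N) :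
    |2 * fracRho N m x - fracRho N m (x + y) - fracRho N m (x - y)| ≤ m * (m + 2) * ‖y‖ ^ 2 := by
  have ep : 1 + ‖x + y‖ ^ 2 = (1 + ‖x‖ ^ 2) + ‖y‖ ^ 2 + 2 * inner ℝ x y := by
    rw [norm_add_sq_real]; ring
  have em : 1 + ‖x - y‖ ^ 2 = (1 + ‖x‖ ^ 2) + ‖y‖ ^ 2 - 2 * inner ℝ x y := by
    rw [norm_sub_sq_real]; ring
  obtain ⟨hl, hu⟩ := rpow_neg_second_diff (a := m / 2) (p := 1 + ‖x‖ ^ 2) (r := ‖y‖ ^ 2)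
    (d := 2 * inner ℝ x y) (by linarith) (by nlinarith [sq_nonneg ‖x‖]) (sq_nonneg _)
    (by rw [← ep]; nlinarith [sq_nonneg ‖x + y‖]) (by rw [← em]; nlinarith [sq_nonneg ‖x - y‖])
  rw [← ep, ← em] at hl hu
  have hin : (inner ℝ x y) ^ 2 ≤ ‖y‖ ^ 2 := by
    have h := abs_real_inner_le_norm x y
    have h' : |inner ℝ x y| ≤ ‖y‖ :=
      h.trans (mul_le_of_le_one_left (norm_nonneg _) hx)
    exact sq_le_sq' (by linarith [neg_abs_le (inner ℝ x y)])
      (by linarith [le_abs_self (inner ℝ x y)])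
  have hm2 : 0 ≤ m * (m + 2) := by positivity
  unfold fracRho
  rw [abs_le]
  constructor
  · nlinarith
  · have : m * ‖y‖ ^ 2 ≤ m * (m + 2) * ‖y‖ ^ 2 := by
      apply mul_le_mul_of_nonneg_right _ (sq_nonneg _)
      nlinarith
    linarith

/-! ### Integrals of radial powers -/

/-- The radial majorant of the symmetrized integrand: the quadratic bound on half of the second
difference for `r ≤ 2`, and the trivial bound `1` on differences of `ρ_m` for `r > 2`. -/
def radMaj (N : ℕ) (s A r : ℝ) : ℝ :=
  (if r ≤ 2 then A * r ^ 2 else 1) / r ^ ((N : ℝ) + 2 * s)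

/-- `r^{N-1}` (the density of polar coordinates) times `r^{-(N+2s)}`. -/
lemma pow_mul_inv_rpow {N : ℕ} (hN : 1 ≤ N) (s : ℝ) {r : ℝ} (hr : 0 < r) :
    r ^ (N - 1) * (1 / r ^ ((N : ℝ) + 2 * s)) = r ^ (-1 - 2 * s) := by
  rw [one_div, ← Real.rpow_neg hr.le, ← Real.rpow_natCast r (N - 1), ← Real.rpow_add hr,
    Nat.cast_sub hN]
  congr 1
  push_cast
  ring

lemma pow_mul_radMaj_of_le {N : ℕ} (hN : 1 ≤ N) (s A : ℝ) {r : ℝ} (hr : 0 < r) (h2 : r ≤ 2) :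
    r ^ (N - 1) * radMaj N s A r = A * r ^ (1 - 2 * s) := by
  have e : r ^ (1 - 2 * s) = r ^ 2 * r ^ (-1 - 2 * s) := by
    rw [← Real.rpow_natCast r 2, ← Real.rpow_add hr]
    congr 1
    push_cast
    ring
  rw [e, ← pow_mul_inv_rpow hN s hr, radMaj, if_pos h2]
  ring

lemma pow_mul_radMaj_of_lt {N : ℕ} (hN : 1 ≤ N) (s A : ℝ) {r : ℝ} (h2 : 2 < r) :
    r ^ (N - 1) * radMaj N s A r = r ^ (-1 - 2 * s) := by
  rw [← pow_mul_inv_rpow hN s (by linarith), radMaj, if_neg (not_le.2 h2)]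

lemma integrableOn_radMaj_inner {N : ℕ} (hN : 1 ≤ N) {s : ℝ} (hs1 : s < 1) (A : ℝ) :
    IntegrableOn (fun r : ℝ => r ^ (N - 1) * radMaj N s A r) (Ioc 0 2) := by
  have h : IntegrableOn (fun r : ℝ => A * r ^ (1 - 2 * s)) (Ioc 0 2) := by
    have := (intervalIntegral.intervalIntegrable_rpow' (a := 0) (b := 2)
      (show -1 < 1 - 2 * s by linarith)).const_mul A
    rwa [intervalIntegrable_iff_integrableOn_Ioc_of_le (by norm_num)] at this
  exact h.congr_fun (fun r hr => (pow_mul_radMaj_of_le hN s A hr.1 hr.2).symm) measurableSet_Ioc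

lemma integrableOn_radMaj_outer {N : ℕ} (hN : 1 ≤ N) {s : ℝ} (hs0 : 0 < s) (A : ℝ) :
    IntegrableOn (fun r : ℝ => r ^ (N - 1) * radMaj N s A r) (Ioi 2) :=
  (integrableOn_Ioi_rpow_of_lt (show -1 - 2 * s < -1 by linarith) two_pos).congr_fun
    (fun _ hr => (pow_mul_radMaj_of_lt hN s A hr).symm) measurableSet_Ioi

lemma integrable_radMaj {N : ℕ} (hN : 1 ≤ N) {s : ℝ} (hs0 : 0 < s) (hs1 : s < 1) (A : ℝ) :
    Integrable (fun y : ES N => radMaj N s A ‖y‖) := by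
  have : Nonempty (Fin N) := ⟨⟨0, hN⟩⟩
  rw [integrable_fun_norm_addHaar volume (f := radMaj N s A)]
  simp only [finrank_euclideanSpace, Fintype.card_fin, smul_eq_mul]
  rw [← Ioc_union_Ioi_eq_Ioi (show (0 : ℝ) ≤ 2 by norm_num)]
  exact (integrableOn_radMaj_inner hN hs1 A).union (integrableOn_radMaj_outer hN hs0 A)

lemma natCast_mul_volume_ball (N : ℕ) (hN : 1 ≤ N) :
    (N : ℝ) * (volume : Measure (ES N)).real (Metric.ball 0 1) = sphArea N := by
  have : Nonempty (Fin N) := ⟨⟨0, hN⟩⟩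
  have hN0 : (N : ℝ) / 2 ≠ 0 := by positivity
  have hG : 0 < Real.Gamma ((N : ℝ) / 2) := Real.Gamma_pos_of_pos (by positivity)
  have hpi : √Real.pi ^ N = Real.pi ^ ((N : ℝ) / 2) := by
    rw [Real.sqrt_eq_rpow, ← Real.rpow_natCast, ← Real.rpow_mul Real.pi_pos.le]
    congr 1
    ring
  rw [Measure.real, EuclideanSpace.volume_ball, sphArea]
  simp only [ENNReal.ofReal_one, one_pow, one_mul, Fintype.card_fin]
  rw [ENNReal.toReal_ofReal (by
    have := Real.Gamma_pos_of_pos (show 0 < (N : ℝ) / 2 + 1 by positivity)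
    positivity), hpi, Real.Gamma_add_one hN0]
  field_simp

lemma integral_radMaj {N : ℕ} (hN : 1 ≤ N) {s : ℝ} (hs0 : 0 < s) (hs1 : s < 1) (A : ℝ) :
    ∫ y : ES N, radMaj N s A ‖y‖ =
      sphArea N * (A * 2 ^ (2 - 2 * s) / (2 - 2 * s) + 2 ^ (-(2 * s)) / (2 * s)) := by
  have : Nonempty (Fin N) := ⟨⟨0, hN⟩⟩
  rw [integral_fun_norm_addHaar volume (radMaj N s A)]
  simp only [finrank_euclideanSpace, Fintype.card_fin, smul_eq_mul, nsmul_eq_mul]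
  rw [← mul_assoc, natCast_mul_volume_ball N hN,
    ← Ioc_union_Ioi_eq_Ioi (show (0 : ℝ) ≤ 2 by norm_num),
    setIntegral_union (Set.Ioc_disjoint_Ioi le_rfl) measurableSet_Ioi
      (integrableOn_radMaj_inner hN hs1 A) (integrableOn_radMaj_outer hN hs0 A),
    setIntegral_congr_fun measurableSet_Ioc
      (fun r hr => pow_mul_radMaj_of_le hN s A hr.1 hr.2),
    setIntegral_congr_fun measurableSet_Ioi (fun r hr => pow_mul_radMaj_of_lt hN s A hr),
    integral_Ioi_rpow_of_lt (by linarith) two_pos, integral_const_mul,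
    ← intervalIntegral.integral_of_le (by norm_num), integral_rpow (Or.inl (by linarith)),
    Real.zero_rpow (by linarith)]
  congr 1
  have e1 : 1 - 2 * s + 1 = 2 - 2 * s := by ring
  have e2 : -1 - 2 * s + 1 = -(2 * s) := by ring
  rw [e1, e2, neg_div_neg_eq]
  ring

lemma integrableOn_inv_norm_rpow {N : ℕ} (hN : 1 ≤ N) {s : ℝ} (hs0 : 0 < s) {ε : ℝ}
    (hε : 0 < ε) :
    Integrable (fun y : ES N =>
      (Ioi ε).indicator (fun r : ℝ => 1 / r ^ ((N : ℝ) + 2 * s)) ‖y‖) := by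
  have : Nonempty (Fin N) := ⟨⟨0, hN⟩⟩
  rw [integrable_fun_norm_addHaar volume
    (f := (Ioi ε).indicator (fun r : ℝ => 1 / r ^ ((N : ℝ) + 2 * s)))]
  simp only [finrank_euclideanSpace, Fintype.card_fin, smul_eq_mul]
  have h := (integrable_indicator_iff measurableSet_Ioi).2
    (integrableOn_Ioi_rpow_of_lt (show -1 - 2 * s < -1 by linarith) hε)
  refine h.integrableOn.congr_fun (fun r hr => ?_) measurableSet_Ioi
  by_cases hr' : r ∈ Ioi ε
  · simp only [indicator_of_mem hr', pow_mul_inv_rpow hN s (mem_Ioi.1 hr)]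
  · simp only [indicator_of_notMem hr', mul_zero]

/-! ### Symmetrization of the truncated integral -/

/-- The truncated kernel integrand of the fractional Laplacian, extended by zero. -/
def truncInt (N : ℕ) (s : ℝ) (u : ES N → ℝ) (x : ES N) (ε : ℝ) (ξ : ES N) : ℝ :=
  {ξ : ES N | ε < ‖x - ξ‖}.indicator
    (fun ξ => (u x - u ξ) / ‖x - ξ‖ ^ ((N : ℝ) + 2 * s)) ξ

/-- The symmetrized integrand `(2u(x) - u(x+y) - u(x-y)) / (2|y|^{N+2s})`. -/
def symInt (N : ℕ) (s : ℝ) (u : ES N → ℝ) (x : ES N) (y : ES N) : ℝ :=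
  (2 * u x - u (x + y) - u (x - y)) / 2 / ‖y‖ ^ ((N : ℝ) + 2 * s)

lemma measurableSet_trunc {N : ℕ} (x : ES N) (ε : ℝ) : MeasurableSet {ξ : ES N | ε < ‖x - ξ‖} :=
  measurableSet_lt measurable_const (by fun_prop)

lemma integrable_truncInt {N : ℕ} (hN : 1 ≤ N) {s : ℝ} (hs0 : 0 < s) {u : ES N → ℝ}
    (hu : Continuous u) (h0 : ∀ x, 0 ≤ u x) (h1 : ∀ x, u x ≤ 1) (x : ES N) {ε : ℝ}
    (hε : 0 < ε) : Integrable (truncInt N s u x ε) := by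
  refine ((integrableOn_inv_norm_rpow hN hs0 hε).comp_sub_left x).mono' ?_ ?_
  · have hum := hu.measurable
    have : Measurable (truncInt N s u x ε) := by
      refine Measurable.indicator ?_ (measurableSet_trunc x ε)
      fun_prop
    exact this.aestronglyMeasurable
  · refine Eventually.of_forall fun ξ => ?_
    by_cases h : ε < ‖x - ξ‖
    · have hmem : ‖x - ξ‖ ∈ Ioi ε := h
      have hmem' : ξ ∈ {ξ : ES N | ε < ‖x - ξ‖} := h
      rw [truncInt, indicator_of_mem hmem', indicator_of_mem hmem, Real.norm_eq_abs, abs_div,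
        abs_of_nonneg (Real.rpow_nonneg (norm_nonneg (x - ξ)) _)]
      gcongr
      rw [abs_le]
      constructor <;> linarith [h0 x, h1 x, h0 ξ, h1 ξ]
    · have hmem : ‖x - ξ‖ ∉ Ioi ε := h
      have hmem' : ξ ∉ {ξ : ES N | ε < ‖x - ξ‖} := h
      rw [truncInt, indicator_of_notMem hmem', indicator_of_notMem hmem, norm_zero]

/-- Averaging the substitutions `ξ = x + y` and `ξ = x - y`. -/
lemma setIntegral_eq_integral_symInt {N : ℕ} (hN : 1 ≤ N) {s : ℝ} (hs0 : 0 < s) {u : ES N → ℝ}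
    (hu : Continuous u) (h0 : ∀ x, 0 ≤ u x) (h1 : ∀ x, u x ≤ 1) (x : ES N) {ε : ℝ}
    (hε : 0 < ε) :
    ∫ ξ in {ξ : ES N | ε < ‖x - ξ‖}, (u x - u ξ) / ‖x - ξ‖ ^ ((N : ℝ) + 2 * s) =
      ∫ y : ES N, {y : ES N | ε < ‖y‖}.indicator (symInt N s u x) y := by
  have hi := integrable_truncInt hN hs0 hu h0 h1 x hε
  have ep : ∫ y : ES N, truncInt N s u x ε (x + y) = ∫ ξ : ES N, truncInt N s u x ε ξ :=
    integral_add_left_eq_self _ x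
  have em : ∫ y : ES N, truncInt N s u x ε (x - y) = ∫ ξ : ES N, truncInt N s u x ε ξ :=
    integral_sub_left_eq_self _ volume x
  have hsum : ∫ y : ES N, (truncInt N s u x ε (x + y) + truncInt N s u x ε (x - y)) / 2 =
      ∫ ξ : ES N, truncInt N s u x ε ξ := by
    rw [integral_div, integral_add (hi.comp_add_left x) (hi.comp_sub_left x), ep, em]
    ring
  rw [← integral_indicator (measurableSet_trunc x ε)]
  change ∫ ξ : ES N, truncInt N s u x ε ξ = _
  rw [← hsum]
  congr 1
  ext y
  by_cases h : ε < ‖y‖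
  · simp [truncInt, symInt, indicator, h]
    ring
  · simp [truncInt, indicator, h]

lemma symInt_abs_le (N : ℕ) (s : ℝ) {m : ℝ} (hm : 0 < m) {x : ES N} (hx : ‖x‖ ≤ 1) (y : ES N) :
    |symInt N s (fracRho N m) x y| ≤ radMaj N s (m * (m + 2) / 2) ‖y‖ := by
  rw [symInt, radMaj, abs_div, abs_of_nonneg (Real.rpow_nonneg (norm_nonneg y) _)]
  apply div_le_div_of_nonneg_right _ (Real.rpow_nonneg (norm_nonneg y) _)
  rw [abs_div, abs_two]
  split_ifs
  · linarith [fracRho_second_diff_abs_le N hm hx y]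
  · rw [div_le_one two_pos, abs_le]
    have := fracRho_le_one N hm
    have h0 := fracRho_pos N m
    constructor <;> linarith [this x, this (x + y), this (x - y), h0 x, h0 (x + y), h0 (x - y)]

lemma measurable_symInt (N : ℕ) (s m : ℝ) (x : ES N) :
    Measurable (symInt N s (fracRho N m) x) := by
  have := (continuous_fracRho N m).measurable
  unfold symInt
  fun_prop

/-- The principal value exists because the symmetrized integrand is absolutely integrable. -/
lemma hasFracLapAt_fracRho {N : ℕ} (hN : 1 ≤ N) {s : ℝ} (hs0 : 0 < s) (hs1 : s < 1) {m : ℝ}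
    (hm : 0 < m) {x : ES N} (hx : ‖x‖ ≤ 1) :
    HasFracLapAt N s (fracRho N m) x
      (fracC N s * ∫ y : ES N, symInt N s (fracRho N m) x y) := by
  refine Tendsto.const_mul _ ?_
  have hlim : Tendsto (fun ε : ℝ => ∫ y : ES N,
      {y : ES N | ε < ‖y‖}.indicator (symInt N s (fracRho N m) x) y)
      (nhdsWithin 0 (Ioi 0)) (nhds (∫ y : ES N, symInt N s (fracRho N m) x y)) := by
    refine tendsto_integral_filter_of_dominated_convergence
      (fun y => radMaj N s (m * (m + 2) / 2) ‖y‖) ?_ ?_ (integrable_radMaj hN hs0 hs1 _) ?_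
    · exact Eventually.of_forall fun ε => ((measurable_symInt N s m x).indicator
        (measurableSet_lt measurable_const measurable_norm)).aestronglyMeasurable
    · exact Eventually.of_forall fun ε => Eventually.of_forall fun y =>
        (norm_indicator_le_norm_self _ _).trans (symInt_abs_le N s hm hx y)
    · refine Eventually.of_forall fun y => ?_
      refine tendsto_const_nhds.congr' ?_
      rcases eq_or_ne y 0 with rfl | hy
      · refine Eventually.of_forall fun ε => ?_
        have h0 : symInt N s (fracRho N m) x 0 = 0 := by simp [symInt]; left; ring
        simp [indicator, h0]
      · filter_upwards [nhdsWithin_le_nhds (Iio_mem_nhds (norm_pos_iff.2 hy))] with ε hε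
        have hmem : y ∈ {y : ES N | ε < ‖y‖} := hε
        rw [indicator_of_mem hmem]
  refine hlim.congr' ?_
  filter_upwards [self_mem_nhdsWithin] with ε hε
  exact (setIntegral_eq_integral_symInt hN hs0 (continuous_fracRho N m)
    (fun z => (fracRho_pos N m z).le) (fracRho_le_one N hm) x hε).symm

lemma fracC_nonneg (N : ℕ) {s : ℝ} (hs0 : 0 < s) (hs1 : s < 1) : 0 ≤ fracC N s := by
  have h1 := Real.Gamma_pos_of_pos (show 0 < (N : ℝ) / 2 + s by positivity)
  have h2 := Real.Gamma_pos_of_pos (show 0 < 1 - s by linarith)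
  have := Real.pi_pos
  unfold fracC
  positivity

lemma sphArea_nonneg (N : ℕ) (hN : 1 ≤ N) : 0 ≤ sphArea N := by
  rw [← natCast_mul_volume_ball N hN]
  positivity

/-- For `m > N` and `|x| ≤ 1`,
`|(-Δ)^s ρ_m(x)| ≤ c_{N,s} |S^{N-1}| ( m(2m+3) 2^{1-2s}/(1-s) + 2^{-2s}/s )`. -/
theorem fracLap_rho_bound_in_ball (N : ℕ) (hN : 1 ≤ N) (s : ℝ) (hs0 : 0 < s)
    (hs1 : s < 1) (m : ℝ) (hm : (N : ℝ) < m) :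
    ∀ x : ES N, ‖x‖ ≤ 1 → ∃ v : ℝ,
      HasFracLapAt N s (fracRho N m) x v ∧
      |v| ≤ fracC N s * sphArea N *
        (m * (2 * m + 3) * 2 ^ (1 - 2 * s) / (1 - s) + 2 ^ (-(2 * s)) / s) := by
  intro x hx
  have hm0 : 0 < m := lt_of_le_of_lt (Nat.cast_nonneg N) hm
  refine ⟨_, hasFracLapAt_fracRho hN hs0 hs1 hm0 hx, ?_⟩
  have hle : |∫ y : ES N, symInt N s (fracRho N m) x y| ≤
      ∫ y : ES N, radMaj N s (m * (m + 2) / 2) ‖y‖ := by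
    rw [← Real.norm_eq_abs]
    exact norm_integral_le_of_norm_le (integrable_radMaj hN hs0 hs1 _)
      (Eventually.of_forall (symInt_abs_le N s hm0 hx))
  rw [integral_radMaj hN hs0 hs1] at hle
  rw [abs_mul, abs_of_nonneg (fracC_nonneg N hs0 hs1), mul_assoc]
  refine mul_le_mul_of_nonneg_left (hle.trans ?_) (fracC_nonneg N hs0 hs1)
  refine mul_le_mul_of_nonneg_left (add_le_add ?_ ?_) (sphArea_nonneg N hN)
  · have e : (2 : ℝ) ^ (2 - 2 * s) = 2 * 2 ^ (1 - 2 * s) := by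
      rw [show 2 - 2 * s = 1 + (1 - 2 * s) by ring, Real.rpow_add two_pos, Real.rpow_one]
    have hs : 0 < 1 - s := by linarith
    rw [e, show m * (m + 2) / 2 * (2 * (2 : ℝ) ^ (1 - 2 * s)) / (2 - 2 * s) =
      m * (m + 2) / 2 * 2 ^ (1 - 2 * s) / (1 - s) by
        rw [show 2 - 2 * s = 2 * (1 - s) by ring]; field_simp]
    gcongr
    nlinarith
  · gcongr
    linarith
end
end

section
/- Let N ≥ 1, 0 < s < 1, η(x) = (1+|x|²)^{-(N+2s)/2}, and let φ ∈ C_c^∞(ℝ) satisfy φ(t) = 1 for |t| ≤ 1 and φ(t) = 0 for |t| > 2. For R ≥ 1 set φ_R(x) = φ(|x|/R). Then for every fixed x ∈ ℝ^N, (-Δ)^s(η φ_R)(x) → (-Δ)^s η(x) as R → ∞. -/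
/-!
The principal value is turned into an absolutely convergent integral by symmetrization: averaging
the truncated integral over `z` and `-z` (where `ξ = x + z`) replaces the numerator
`u x - u ξ` by half of the second difference `2 u x - u (x + z) - u (x - z)`. For `u` bounded
and `C²`, the second difference is at most `C min(|z|², 1)`
(`exists_abs_secondDiff_le`), and `min(|z|², 1) / |z|^{N+2s}` is integrable because `0 < s < 1`
(`integrable_kernel`). Dominated convergence as `ε → 0⁺` then gives
`(-Δ)^s u (x) = c_{N,s} · ½ ∫ (2 u x - u (x + z) - u (x - z)) / |z|^{N+2s} dz`
(`hasFracLapAt_of_secondDiff`).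

For the passage `R → ∞`, once `R ≥ |x| + 1` the functions `η` and `η φ_R` coincide on the unit ball
around `x`. The bound for `η` therefore controls the second differences of `η φ_R` for `|z| ≤ 1`,
and boundedness controls them for `|z| > 1`; the resulting bound does not depend on `R`, the
integrands are eventually equal to their limits pointwise, and dominated convergence applies.
-/

open MeasureTheory Filter Set

noncomputable section

/-! ### Second differences and the integrable majorant -/

/-- The second difference `2 u x - u (x + z) - u (x - z)`. -/
def secondDiff {N : ℕ} (u : ES N → ℝ) (x z : ES N) : ℝ :=
  2 * u x - u (x + z) - u (x - z)

/-- The integrable majorant `min(|z|², 1) / |z|^{N+2s}`. -/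
def kernelMajorant (N : ℕ) (s : ℝ) (z : ES N) : ℝ :=
  min (‖z‖ ^ 2) 1 / ‖z‖ ^ ((N : ℝ) + 2 * s)

/-- In polar coordinates the majorant is `r^{1-2s}` on `(0,1]` and `r^{-1-2s}` on `(1,∞)`. -/
lemma integrable_kernel (N : ℕ) (hN : 1 ≤ N) (s : ℝ) (hs0 : 0 < s) (hs1 : s < 1) :
    Integrable (kernelMajorant N s) volume := by
  have : Nonempty (Fin N) := ⟨⟨0, hN⟩⟩
  have key := (integrable_fun_norm_addHaar (E := ES N) volume
    (f := fun r : ℝ => min (r ^ 2) 1 / r ^ ((N : ℝ) + 2 * s)))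
  refine key.2 ?_
  have hd : Module.finrank ℝ (ES N) = N := by simp
  rw [hd]
  have hpow : ∀ r : ℝ, 0 < r → r ^ (N - 1) = r ^ ((N : ℝ) - 1) := by
    intro r hr
    rw [← Real.rpow_natCast, Nat.cast_sub hN, Nat.cast_one]
  rw [← Ioc_union_Ioi_eq_Ioi (zero_le_one (α := ℝ))]
  refine IntegrableOn.union ?_ ?_
  · have h : IntegrableOn (fun r : ℝ => r ^ (1 - 2 * s)) (Ioc 0 1) := by
      rw [← intervalIntegrable_iff_integrableOn_Ioc_of_le zero_le_one]
      exact intervalIntegral.intervalIntegrable_rpow' (by linarith)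
    refine h.congr_fun ?_ measurableSet_Ioc
    intro r hr
    have hr0 : 0 < r := hr.1
    have h1 : min (r ^ 2) 1 = r ^ (2 : ℝ) := by
      rw [Real.rpow_two]; exact min_eq_left (pow_le_one₀ hr0.le hr.2)
    simp only [smul_eq_mul]
    rw [h1, hpow r hr0, ← Real.rpow_sub hr0, ← Real.rpow_add hr0]
    congr 1; ring
  · have h : IntegrableOn (fun r : ℝ => r ^ (-1 - 2 * s)) (Ioi 1) :=
      integrableOn_Ioi_rpow_of_lt (by linarith) one_pos
    refine h.congr_fun ?_ measurableSet_Ioi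
    intro r hr
    have hr1 : 1 < r := hr
    have hr0 : 0 < r := by linarith
    have h1 : min (r ^ 2) 1 = r ^ (0 : ℝ) := by
      rw [Real.rpow_zero]; exact min_eq_right (one_le_pow₀ hr1.le)
    simp only [smul_eq_mul]
    rw [h1, hpow r hr0, ← Real.rpow_sub hr0, ← Real.rpow_add hr0]
    congr 1; ring

lemma abs_secondDiff_le_of_bound {N : ℕ} {u : ES N → ℝ} {M : ℝ} (hM : ∀ y, |u y| ≤ M)
    (x z : ES N) : |secondDiff u x z| ≤ 4 * M := by
  have h1 := abs_le.1 (hM x)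
  have h2 := abs_le.1 (hM (x + z))
  have h3 := abs_le.1 (hM (x - z))
  unfold secondDiff
  rw [abs_le]; constructor <;> linarith

/-- Taylor's formula to first order, with the Lipschitz constant of `fderiv u` near `x` controlling
the remainder; for large `z` the bound on `u` is used instead. -/
lemma exists_abs_secondDiff_le {N : ℕ} {u : ES N → ℝ} {M : ℝ} {x : ES N}
    (hM : ∀ y, |u y| ≤ M) (hu : ContDiff ℝ 2 u) :
    ∃ C : ℝ, 0 ≤ C ∧ ∀ z, |secondDiff u x z| ≤ C * min (‖z‖ ^ 2) 1 := by
  have hM0 : 0 ≤ M := (abs_nonneg _).trans (hM x)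
  have hd : Differentiable ℝ u := hu.differentiable (by norm_num)
  have hfd : ContDiff ℝ 1 (fderiv ℝ u) := hu.fderiv_right (by norm_num)
  obtain ⟨K, t, ht, hK⟩ := hfd.contDiffAt.exists_lipschitzOnWith (x := x)
  obtain ⟨δ, hδ, hball⟩ := Metric.nhds_basis_closedBall.mem_iff.1 ht
  have taylor : ∀ w : ES N, ‖w‖ ≤ δ → |u (x + w) - u x - fderiv ℝ u x w| ≤ K * ‖w‖ ^ 2 := by
    intro w hw
    have := Convex.norm_image_sub_le_of_norm_fderiv_le' (𝕜 := ℝ) (f := u) (φ := fderiv ℝ u x)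
      (C := K * ‖w‖) (s := Metric.closedBall x ‖w‖) (x := x) (y := x + w)
      (fun y _ => hd y) ?_ (convex_closedBall _ _) (by simp) (by simp)
    · rw [Real.norm_eq_abs] at this
      simpa [pow_two, mul_assoc] using this
    · intro y hy
      have hy' : ‖y - x‖ ≤ ‖w‖ := by simpa [dist_eq_norm] using hy
      have hyt : y ∈ t := hball (by
        rw [Metric.mem_closedBall, dist_eq_norm]; exact hy'.trans hw)
      have hxt : x ∈ t := hball (Metric.mem_closedBall_self hδ.le)
      have := hK.norm_sub_le hyt hxt
      exact this.trans (by gcongr)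
  have hC : 0 ≤ max (2 * (K : ℝ)) (4 * M) + 4 * M / δ ^ 2 := by positivity
  refine ⟨_, hC, fun z => ?_⟩
  have hb := abs_secondDiff_le_of_bound hM x z
  rcases le_total (‖z‖ ^ 2) 1 with h1 | h1
  · rw [min_eq_left h1]
    rcases le_total ‖z‖ δ with h2 | h2
    · have e1 := abs_le.1 (taylor z h2)
      have e2 := abs_le.1 (taylor (-z) (by simpa using h2))
      simp only [map_neg, norm_neg, ← sub_eq_add_neg] at e2
      have e3 : |secondDiff u x z| ≤ 2 * K * ‖z‖ ^ 2 := by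
        unfold secondDiff
        rw [abs_le]; constructor <;> linarith [e1.1, e1.2, e2.1, e2.2]
      refine e3.trans (mul_le_mul_of_nonneg_right ?_ (by positivity))
      have : 0 ≤ 4 * M / δ ^ 2 := by positivity
      linarith [le_max_left (2 * (K : ℝ)) (4 * M)]
    · refine hb.trans ?_
      have h3 : 4 * M = 4 * M / δ ^ 2 * δ ^ 2 := by field_simp
      have h4 : 0 ≤ 4 * M / δ ^ 2 := by positivity
      have h5 : 0 ≤ max (2 * (K : ℝ)) (4 * M) := by positivity
      calc 4 * M = 4 * M / δ ^ 2 * δ ^ 2 := h3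
        _ ≤ (max (2 * (K : ℝ)) (4 * M) + 4 * M / δ ^ 2) * ‖z‖ ^ 2 := by
          gcongr; linarith
  · rw [min_eq_right h1, mul_one]
    refine hb.trans ?_
    have : 0 ≤ 4 * M / δ ^ 2 := by positivity
    linarith [le_max_right (2 * (K : ℝ)) (4 * M)]

/-! ### Symmetrization of the principal value -/

lemma abs_div_le_kernel {N : ℕ} {s C a : ℝ} {z : ES N} (h : |a| ≤ C * min (‖z‖ ^ 2) 1) :
    ‖a / ‖z‖ ^ ((N : ℝ) + 2 * s)‖ ≤ C * kernelMajorant N s z := by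
  have hp : 0 ≤ ‖z‖ ^ ((N : ℝ) + 2 * s) := by positivity
  rw [norm_div, Real.norm_eq_abs, Real.norm_of_nonneg hp, kernelMajorant, ← mul_div_assoc]
  gcongr

/-- The principal value equals half the absolutely convergent integral of second differences. -/
lemma hasFracLapAt_of_secondDiff {N : ℕ} (hN : 1 ≤ N) {s : ℝ} (hs0 : 0 < s) (hs1 : s < 1)
    {u : ES N → ℝ} {M C : ℝ} {x : ES N} (huc : Continuous u) (hM : ∀ y, |u y| ≤ M)
    (hC : ∀ z, |secondDiff u x z| ≤ C * min (‖z‖ ^ 2) 1) :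
    HasFracLapAt N s u x
      (fracC N s * (2⁻¹ * ∫ z, secondDiff u x z / ‖z‖ ^ ((N : ℝ) + 2 * s))) := by
  have hD := integrable_kernel N hN s hs0 hs1
  have hM0 : 0 ≤ M := (abs_nonneg _).trans (hM x)
  have hS : ∀ ε : ℝ, MeasurableSet {z : ES N | ε < ‖z‖} := fun ε =>
    measurableSet_lt measurable_const measurable_norm
  have hg : Measurable (fun z => secondDiff u x z / ‖z‖ ^ ((N : ℝ) + 2 * s)) := by
    have : Measurable (secondDiff u x) := by
      unfold secondDiff
      exact (by fun_prop : Continuous _).measurable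
    exact this.div (measurable_norm.pow_const _)
  -- Symmetrization of the truncated integral.
  have hsymm : ∀ ε : ℝ, 0 < ε →
      (∫ ξ in {ξ : ES N | ε < ‖x - ξ‖}, (u x - u ξ) / ‖x - ξ‖ ^ ((N : ℝ) + 2 * s)) =
      2⁻¹ * ∫ z, {z : ES N | ε < ‖z‖}.indicator
        (fun z => secondDiff u x z / ‖z‖ ^ ((N : ℝ) + 2 * s)) z := by
    intro ε hε
    set F : ES N → ℝ := {z : ES N | ε < ‖z‖}.indicator
      (fun z => (u x - u (x + z)) / ‖z‖ ^ ((N : ℝ) + 2 * s)) with hF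
    have h1 : (∫ ξ in {ξ : ES N | ε < ‖x - ξ‖}, (u x - u ξ) / ‖x - ξ‖ ^ ((N : ℝ) + 2 * s)) =
        ∫ z, F z := by
      have hSx : MeasurableSet {ξ : ES N | ε < ‖x - ξ‖} :=
        measurableSet_lt measurable_const (by fun_prop)
      rw [← integral_indicator hSx, ← integral_sub_right_eq_self F x]
      refine integral_congr_ae (Eventually.of_forall fun ξ => ?_)
      simp only [hF, indicator, mem_ofPred_eq, norm_sub_rev x ξ, add_sub_cancel]
    have hFi : Integrable F := by
      refine Integrable.mono' (hD.const_mul (2 * M * max 1 ((ε ^ 2)⁻¹))) ?_ ?_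
      · refine (Measurable.indicator ?_ (hS ε)).aestronglyMeasurable
        exact Measurable.div (by fun_prop : Continuous _).measurable (measurable_norm.pow_const _)
      · refine Eventually.of_forall fun z => ?_
        by_cases hz : ε < ‖z‖
        · rw [hF, indicator_of_mem (by exact hz)]
          refine abs_div_le_kernel ?_
          have h2 : |u x - u (x + z)| ≤ 2 * M := by
            have e1 := abs_le.1 (hM x)
            have e2 := abs_le.1 (hM (x + z))
            rw [abs_le]; constructor <;> linarith
          have h3 : 1 ≤ max 1 ((ε ^ 2)⁻¹) * min (‖z‖ ^ 2) 1 := by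
            rcases le_total (‖z‖ ^ 2) 1 with h | h
            · rw [min_eq_left h]
              calc (1 : ℝ) = (ε ^ 2)⁻¹ * ε ^ 2 := by field_simp
                _ ≤ _ := by gcongr; exact le_max_right _ _
            · rw [min_eq_right h, mul_one]; exact le_max_left _ _
          rw [mul_assoc]
          refine h2.trans ?_
          nlinarith
        · rw [hF, indicator_of_notMem (by exact hz), norm_zero]
          unfold kernelMajorant
          positivity
    have h4 : ∫ z, F z + F (-z) = ∫ z, {z : ES N | ε < ‖z‖}.indicator
        (fun z => secondDiff u x z / ‖z‖ ^ ((N : ℝ) + 2 * s)) z := by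
      refine integral_congr_ae (Eventually.of_forall fun z => ?_)
      by_cases hz : ε < ‖z‖
      · simp only [hF, indicator, mem_ofPred_eq, norm_neg, hz, if_true, secondDiff,
          ← sub_eq_add_neg]
        ring
      · simp [hF, indicator, hz]
    rw [h1, ← h4, integral_add hFi hFi.comp_neg, integral_neg_eq_self F]
    ring
  refine Tendsto.const_mul _ ?_
  have hlim : Tendsto (fun ε : ℝ => ∫ z, {z : ES N | ε < ‖z‖}.indicator
        (fun z => secondDiff u x z / ‖z‖ ^ ((N : ℝ) + 2 * s)) z) (nhdsWithin 0 (Ioi 0))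
      (nhds (∫ z, secondDiff u x z / ‖z‖ ^ ((N : ℝ) + 2 * s))) := by
    refine tendsto_integral_filter_of_dominated_convergence (fun z => C * kernelMajorant N s z)
      (Eventually.of_forall fun ε => (hg.indicator (hS ε)).aestronglyMeasurable)
      (Eventually.of_forall fun ε => Eventually.of_forall fun z => ?_)
      (hD.const_mul C) (Eventually.of_forall fun z => ?_)
    · exact (norm_indicator_le_norm_self _ _).trans (abs_div_le_kernel (hC z))
    · refine tendsto_const_nhds.congr' ?_
      rcases eq_or_ne z 0 with rfl | hz
      · refine Eventually.of_forall fun ε => ?_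
        have h0 : secondDiff u x 0 = 0 := by simp [secondDiff]; ring
        simp [indicator, h0]
      · have : ∀ᶠ ε : ℝ in nhdsWithin 0 (Ioi 0), ε < ‖z‖ :=
          mem_nhdsWithin_of_mem_nhds (Iio_mem_nhds (norm_pos_iff.2 hz))
        filter_upwards [this] with ε hε
        rw [indicator_of_mem (by exact hε)]
  refine (hlim.const_mul 2⁻¹).congr' ?_
  filter_upwards [self_mem_nhdsWithin] with ε hε
  exact (hsymm ε hε).symm

/-! ### Regularity of the weight and of the cutoff -/

lemma contDiff_fracEta (N : ℕ) (s : ℝ) : ContDiff ℝ 2 (fracEta N s) := by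
  unfold fracEta
  refine ContDiff.rpow_const_of_ne (contDiff_const.add (contDiff_norm_sq ℝ)) fun y => ?_
  positivity

lemma abs_fracEta_le {N : ℕ} {s : ℝ} (hs0 : 0 < s) (y : ES N) : |fracEta N s y| ≤ 1 := by
  unfold fracEta
  rw [abs_of_nonneg (by positivity)]
  refine Real.rpow_le_one_of_one_le_of_nonpos ?_ ?_
  · nlinarith [sq_nonneg ‖y‖]
  · have : (0 : ℝ) ≤ N := Nat.cast_nonneg N
    linarith

/-- The norm is not smooth at the origin, but the cutoff is constant there. -/
lemma contDiff_cutoff {N : ℕ} {φ : ℝ → ℝ} (hφ : ContDiff ℝ (⊤ : ℕ∞) φ)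
    (hφ1 : ∀ t : ℝ, |t| ≤ 1 → φ t = 1) {R : ℝ} (hR : 0 < R) :
    ContDiff ℝ 2 (fun y : ES N => φ (‖y‖ / R)) := by
  have hφ2 : ContDiff ℝ 2 φ := by exact_mod_cast contDiff_infty.1 hφ 2
  rw [contDiff_iff_contDiffAt]
  intro y
  rcases eq_or_ne y 0 with rfl | hy
  · refine (contDiffAt_const (c := (1 : ℝ))).congr_of_eventuallyEq ?_
    filter_upwards [Metric.ball_mem_nhds (0 : ES N) hR] with z hz
    have hz' : ‖z‖ < R := by simpa using hz
    refine hφ1 _ ?_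
    rw [abs_of_nonneg (by positivity), div_le_one hR]
    exact hz'.le
  · exact hφ2.contDiffAt.comp y ((contDiffAt_norm ℝ hy).div_const R)

/-! ### Removing the cutoff -/

/-- For every fixed `x`, `(-Δ)^s (η φ_R)(x) → (-Δ)^s η(x)` as
`R → ∞`. -/
theorem fracLap_eta_cutoff_tendsto (N : ℕ) (hN : 1 ≤ N) (s : ℝ) (hs0 : 0 < s)
    (hs1 : s < 1) (φ : ℝ → ℝ) (hφ : ContDiff ℝ (⊤ : ℕ∞) φ) (hφc : HasCompactSupport φ)
    (hφ1 : ∀ t : ℝ, |t| ≤ 1 → φ t = 1) (hφ0 : ∀ t : ℝ, 2 < |t| → φ t = 0) :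
    ∀ x : ES N, ∃ (v : ℝ) (V : ℝ → ℝ),
      HasFracLapAt N s (fracEta N s) x v ∧
      (∀ R : ℝ, 1 ≤ R →
        HasFracLapAt N s (fun y => fracEta N s y * φ (‖y‖ / R)) x (V R)) ∧
      Filter.Tendsto V Filter.atTop (nhds v) := by
  intro x
  obtain ⟨B, hB⟩ := hφc.exists_bound_of_continuous hφ.continuous
  set u : ℝ → ES N → ℝ := fun R y => fracEta N s y * φ (‖y‖ / R) with hu
  have hηC := contDiff_fracEta N s
  have hηM := fun y : ES N => abs_fracEta_le hs0 y
  have huC : ∀ R : ℝ, 1 ≤ R → ContDiff ℝ 2 (u R) := fun R hR =>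
    hηC.mul (contDiff_cutoff hφ hφ1 (by linarith))
  have huM : ∀ R y, |u R y| ≤ B := by
    intro R y
    rw [hu, abs_mul, ← one_mul B]
    exact mul_le_mul (hηM y) (hB _) (abs_nonneg _) zero_le_one
  have hB0 : 0 ≤ B := (abs_nonneg _).trans (huM 1 x)
  have hagree : ∀ R y, 1 ≤ R → ‖y‖ ≤ R → u R y = fracEta N s y := by
    intro R y hR hy
    have hR0 : 0 < R := by linarith
    have : φ (‖y‖ / R) = 1 := by
      refine hφ1 _ ?_
      rw [abs_of_nonneg (by positivity), div_le_one hR0]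
      exact hy
    simp [hu, this]
  have hdiff : ∀ R z, 1 ≤ R → ‖x‖ + ‖z‖ ≤ R → secondDiff (u R) x z =
      secondDiff (fracEta N s) x z := by
    intro R z hR hz
    have h0 := norm_nonneg z
    unfold secondDiff
    rw [hagree R x hR (by linarith), hagree R (x + z) hR ((norm_add_le _ _).trans hz),
      hagree R (x - z) hR ((norm_sub_le _ _).trans hz)]
  obtain ⟨C, hC0, hC⟩ := exists_abs_secondDiff_le (x := x) hηM hηC
  refine ⟨_, fun R => fracC N s *
      (2⁻¹ * ∫ z, secondDiff (u R) x z / ‖z‖ ^ ((N : ℝ) + 2 * s)),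
    hasFracLapAt_of_secondDiff hN hs0 hs1 hηC.continuous hηM hC, ?_, ?_⟩
  · intro R hR
    obtain ⟨C', -, hC'⟩ := exists_abs_secondDiff_le (x := x) (huM R) (huC R hR)
    exact hasFracLapAt_of_secondDiff hN hs0 hs1 (huC R hR).continuous (huM R) hC'
  · refine Tendsto.const_mul _ (Tendsto.const_mul _ ?_)
    refine tendsto_integral_filter_of_dominated_convergence
      (fun z => (C + 4 * B) * kernelMajorant N s z) ?_ ?_
      ((integrable_kernel N hN s hs0 hs1).const_mul _) (Eventually.of_forall fun z => ?_)
    · filter_upwards [eventually_ge_atTop 1] with R hR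
      have hc := (huC R hR).continuous
      have hm : Measurable (secondDiff (u R) x) := by
        unfold secondDiff
        exact (by fun_prop : Continuous _).measurable
      exact (hm.div (measurable_norm.pow_const _)).aestronglyMeasurable
    · filter_upwards [eventually_ge_atTop (‖x‖ + 1)] with R hR
      have hR1 : 1 ≤ R := by linarith [norm_nonneg x]
      refine Eventually.of_forall fun z => abs_div_le_kernel ?_
      rcases le_total ‖z‖ 1 with hz | hz
      · rw [hdiff R z hR1 (by linarith)]
        refine (hC z).trans ?_
        gcongr
        linarith
      · rw [min_eq_right (one_le_pow₀ hz), mul_one]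
        exact (abs_secondDiff_le_of_bound (huM R) x z).trans (by linarith)
    · refine tendsto_const_nhds.congr' ?_
      filter_upwards [eventually_ge_atTop (‖x‖ + ‖z‖), eventually_ge_atTop 1] with R hR hR1
      rw [hdiff R z hR1 hR]
end
end

section
/- Let N ≥ 1, 0 < s < 1, η(x) = (1+|x|²)^{-(N+2s)/2}, and let φ ∈ C_c^∞(ℝ) satisfy φ(t) = 1 for |t| ≤ 1 and φ(t) = 0 for |t| > 2; for R ≥ 1 set φ_R(x) = φ(|x|/R). Define I(x) = ∫_{ℝ^N} (η(x)−η(y))(φ_R(x)−φ_R(y))/|x−y|^{N+2s} dy. Then there exists C > 0, independent of R and x, such that for all R ≥ 1 and all x with |x| ≤ R/2, |I(x)| ≤ C R^{-2s} η(x). -/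
/-!
If `‖x‖ ≤ R / 2` then `φ (‖x‖ / R) = 1`, so the integrand vanishes unless `R < ‖y‖`. In that
region `‖x‖ ≤ ‖y‖`, hence `0 ≤ η x - η y ≤ η x`, while
`‖x - y‖ ≥ ‖y‖ / 2 ≥ (R / 4) (1 + ‖y / R‖)`. Thus, with `p = N + 2 s` and `M` a bound for
`|1 - φ|`, the integrand is dominated everywhere by
`M 4 ^ p η x R ^ (-p) (1 + ‖y / R‖) ^ (-p)`. This is integrable because `p > N`
(`integrable_one_add_norm`), and the substitution `y = R z` produces the factor
`R ^ (-p) R ^ N = R ^ (-2 s)`.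
-/

open MeasureTheory Filter Set

noncomputable section

/-- The weight `η` is radially nonincreasing and positive, so its decrement is at most `η x`. -/
lemma abs_fracEta_sub_le {N : ℕ} {s : ℝ} (hs0 : 0 < s) {x y : ES N} (h : ‖x‖ ≤ ‖y‖) :
    |fracEta N s x - fracEta N s y| ≤ fracEta N s x := by
  have h1 : fracEta N s y ≤ fracEta N s x := by
    unfold fracEta
    apply Real.rpow_le_rpow_of_nonpos (by positivity) (by gcongr)
    have : (0 : ℝ) ≤ N := Nat.cast_nonneg N
    linarith
  have h2 : 0 ≤ fracEta N s y := by unfold fracEta; positivity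
  rw [abs_of_nonneg (by linarith)]
  linarith

/-- Pointwise domination of the integrand by a rescaled integrable profile. -/
lemma cross_term_integrand_le {N : ℕ} {s : ℝ} (hs0 : 0 < s) {φ : ℝ → ℝ}
    (hφ1 : ∀ t : ℝ, |t| ≤ 1 → φ t = 1) {M : ℝ} (hM : ∀ t, |1 - φ t| ≤ M)
    {R : ℝ} (hR : 0 < R) {x : ES N} (hx : ‖x‖ ≤ R / 2) (y : ES N) :
    ‖(fracEta N s x - fracEta N s y) * (φ (‖x‖ / R) - φ (‖y‖ / R)) /
        ‖x - y‖ ^ ((N : ℝ) + 2 * s)‖ ≤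
      (M * 4 ^ ((N : ℝ) + 2 * s) * fracEta N s x * R ^ (-((N : ℝ) + 2 * s))) *
        (1 + ‖R⁻¹ • y‖) ^ (-((N : ℝ) + 2 * s)) := by
  have hM0 : 0 ≤ M := (abs_nonneg _).trans (hM 0)
  have hp : 0 < (N : ℝ) + 2 * s := by positivity
  have heta : 0 ≤ fracEta N s x := by unfold fracEta; positivity
  have hx1 : φ (‖x‖ / R) = 1 := by
    apply hφ1
    rw [abs_of_nonneg (by positivity), div_le_one hR]
    linarith
  rw [hx1]
  rcases le_or_gt ‖y‖ R with hy | hy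
  · have hy1 : φ (‖y‖ / R) = 1 := by
      apply hφ1
      rw [abs_of_nonneg (by positivity), div_le_one hR]
      exact hy
    rw [hy1, sub_self, mul_zero, zero_div, norm_zero]
    positivity
  · have hn : ‖R⁻¹ • y‖ = ‖y‖ / R := by
      rw [norm_smul, norm_inv, Real.norm_of_nonneg hR.le]
      field_simp
    have hdist : R / 4 * (1 + ‖R⁻¹ • y‖) ≤ ‖x - y‖ := by
      have h1 : R / 4 * (1 + ‖R⁻¹ • y‖) = (R + ‖y‖) / 4 := by
        rw [hn]
        field_simp
      have h2 : ‖y‖ - ‖x‖ ≤ ‖x - y‖ := by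
        rw [norm_sub_rev]
        exact norm_sub_norm_le y x
      rw [h1]
      linarith
    have hker : (‖x - y‖ ^ ((N : ℝ) + 2 * s))⁻¹ ≤
        4 ^ ((N : ℝ) + 2 * s) * R ^ (-((N : ℝ) + 2 * s)) *
          (1 + ‖R⁻¹ • y‖) ^ (-((N : ℝ) + 2 * s)) := by
      rw [← Real.rpow_neg (norm_nonneg _)]
      refine (Real.rpow_le_rpow_of_nonpos (by positivity) hdist (by linarith)).trans_eq ?_
      rw [Real.mul_rpow (by positivity) (by positivity), Real.div_rpow hR.le (by norm_num),
        Real.rpow_neg (by norm_num : (0 : ℝ) ≤ 4), div_inv_eq_mul]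
      ring
    have hxy : ‖x‖ ≤ ‖y‖ := by linarith
    rw [div_eq_mul_inv, norm_mul, norm_mul, Real.norm_eq_abs, Real.norm_eq_abs,
      Real.norm_of_nonneg (by positivity : 0 ≤ (‖x - y‖ ^ ((N : ℝ) + 2 * s))⁻¹)]
    calc _ ≤ fracEta N s x * M * (4 ^ ((N : ℝ) + 2 * s) * R ^ (-((N : ℝ) + 2 * s)) *
          (1 + ‖R⁻¹ • y‖) ^ (-((N : ℝ) + 2 * s))) := by
          gcongr
          · exact abs_fracEta_sub_le hs0 hxy
          · exact hM _
      _ = _ := by ring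

/-- The cross term `I(x)` satisfies `|I(x)| ≤ C R^{-2s} η(x)`
for `|x| ≤ R/2`, with `C` independent of `R` and `x`. -/
theorem cross_term_bound_inner (N : ℕ) (hN : 1 ≤ N) (s : ℝ) (hs0 : 0 < s)
    (hs1 : s < 1) (φ : ℝ → ℝ) (hφ : ContDiff ℝ (⊤ : ℕ∞) φ) (hφc : HasCompactSupport φ)
    (hφ1 : ∀ t : ℝ, |t| ≤ 1 → φ t = 1) (hφ0 : ∀ t : ℝ, 2 < |t| → φ t = 0) :
    ∃ C : ℝ, 0 < C ∧ ∀ R : ℝ, 1 ≤ R → ∀ x : ES N, ‖x‖ ≤ R / 2 →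
      |∫ y : ES N,
          (fracEta N s x - fracEta N s y) * (φ (‖x‖ / R) - φ (‖y‖ / R)) /
            ‖x - y‖ ^ ((N : ℝ) + 2 * s)|
        ≤ C * R ^ (-(2 * s)) * fracEta N s x := by
  obtain ⟨B, hB⟩ := hφc.exists_bound_of_continuous hφ.continuous
  have hM : ∀ t, |1 - φ t| ≤ 1 + B := fun t => by
    have h := hB t
    rw [Real.norm_eq_abs] at h
    calc |1 - φ t| ≤ |1| + |φ t| := abs_sub _ _
      _ ≤ 1 + B := by rw [abs_one]; gcongr
  have hM0 : 0 ≤ 1 + B := (abs_nonneg _).trans (hM 0)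
  have hG : Integrable (fun z : ES N => (1 + ‖z‖) ^ (-((N : ℝ) + 2 * s))) volume := by
    apply integrable_one_add_norm
    rw [finrank_euclideanSpace_fin]
    linarith
  set J : ℝ := ∫ z : ES N, (1 + ‖z‖) ^ (-((N : ℝ) + 2 * s)) with hJ
  have hJ0 : 0 ≤ J := integral_nonneg fun z => by positivity
  -- The summand `1` only serves to make the constant strictly positive.
  refine ⟨(1 + B) * 4 ^ ((N : ℝ) + 2 * s) * J + 1, by positivity, fun R hR x hx => ?_⟩
  have hR0 : 0 < R := by linarith
  have heta : 0 ≤ fracEta N s x := by unfold fracEta; positivity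
  have hbound := norm_integral_le_of_norm_le
    ((hG.comp_smul (inv_ne_zero hR0.ne')).const_mul
      ((1 + B) * 4 ^ ((N : ℝ) + 2 * s) * fracEta N s x * R ^ (-((N : ℝ) + 2 * s))))
    (Eventually.of_forall (cross_term_integrand_le hs0 hφ1 hM hR0 hx))
  rw [Real.norm_eq_abs] at hbound
  refine hbound.trans ?_
  rw [integral_const_mul,
    Measure.integral_comp_inv_smul volume (fun z : ES N => (1 + ‖z‖) ^ (-((N : ℝ) + 2 * s))) R,
    finrank_euclideanSpace_fin, ← hJ, abs_of_nonneg (by positivity), smul_eq_mul]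
  have hscale : R ^ (-((N : ℝ) + 2 * s)) * R ^ N = R ^ (-(2 * s)) := by
    rw [← Real.rpow_natCast, ← Real.rpow_add hR0]
    congr 1
    ring
  calc _ = (1 + B) * 4 ^ ((N : ℝ) + 2 * s) * J *
        (R ^ (-((N : ℝ) + 2 * s)) * R ^ N) * fracEta N s x := by ring
    _ ≤ _ := by
      rw [hscale]
      gcongr
      linarith
end
end
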